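/- arXiv:1507.07186 — 4 statements merged into one kernel-verified Lean document; each statement's English description precedes it below -/
import Mathlib

section
/- Let A be a C*-algebra and let F be a JB*-subtriple of A which is a Chebyshev subspace of A. If a ∈ F is not Brown–Pedersen quasi-invertible in F, then the norm closure of the set {a x* a : x ∈ A} is contained in F. -/
/-!
Suppose `b ∈ F` is a contraction with `b b* e = e = e b* b`, and `v ∈ F` is nonzero and orthogonal
to `b`. The map `z ↦ b b* z b* b` is contractive, preserves `F` and fixes `x = e u* e`, so by
uniqueness it also fixes the best approximation `c` of `x` in `F`. Hence `x - c` is orthogonal to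
`v`, and in a C*-algebra this makes `‖x - c - s v‖ = max ‖x - c‖ ‖s v‖`. If `x ≠ c`, then `c + s v`
would be a second best approximation for small `s`; so `x = c ∈ F`.

Functional calculus in `a* a` approximates `a` by elements `e` for which there are such a `b` and a
`y ∈ F` with `y a* b = b = b a* y`. Since `a` is not Brown–Pedersen quasi-invertible, some Bergmann
value `v = B(a, y)(z)` is nonzero, and the relations on `y` make `v` orthogonal to `b`.
-/

open Metric

section Chebyshev

/-- `c` is a point of `S` nearest to `x`. -/
def IsBestApprox {X : Type*} [SeminormedAddCommGroup X] (S : Set X) (x c : X) : Prop :=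
  c ∈ S ∧ ‖x - c‖ = infDist x S

/-- Chebyshev subspaces: every point has exactly one nearest point in `V`. Such a `V` is
automatically closed, so this is not part of the definition. -/
def IsChebyshevSubspace {R X : Type*} [Semiring R] [SeminormedAddCommGroup X] [Module R X]
    (V : Submodule R X) : Prop :=
  ∀ x : X, ∃! c : X, IsBestApprox (V : Set X) x c

theorem IsBestApprox.of_norm_sub_le {X : Type*} [SeminormedAddCommGroup X] {S : Set X} {x c c' : X}
    (hc : IsBestApprox S x c) (hc' : c' ∈ S) (hle : ‖x - c'‖ ≤ ‖x - c‖) : IsBestApprox S x c' := by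
  refine ⟨hc', (hle.trans_eq hc.2).antisymm ?_⟩
  simpa only [dist_eq_norm] using infDist_le_dist_of_mem (x := x) hc'

namespace IsChebyshevSubspace

theorem isClosed {R X : Type*} [Semiring R] [NormedAddCommGroup X] [Module R X]
    {V : Submodule R X} (hV : IsChebyshevSubspace V) : IsClosed (V : Set X) := by
  refine isClosed_of_closure_subset fun x hx => ?_
  obtain ⟨c, ⟨hcV, hxc⟩, -⟩ := hV x
  rw [infDist_zero_of_mem_closure hx, norm_sub_eq_zero_iff] at hxc
  exact hxc ▸ hcV

theorem mem_of_norm_sub_smul_le_max {𝕜 X : Type*} [NontriviallyNormedField 𝕜]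
    [NormedAddCommGroup X] [NormedSpace 𝕜 X] {V : Submodule 𝕜 X} (hV : IsChebyshevSubspace V)
    {x c v : X} (hc : IsBestApprox (V : Set X) x c) (hv : v ∈ V) (hv0 : v ≠ 0)
    (hmax : ∀ s : 𝕜, ‖x - c - s • v‖ ≤ max ‖x - c‖ ‖s • v‖) : x ∈ V := by
  by_contra hx
  have hxc : 0 < ‖x - c‖ := norm_sub_pos_iff.mpr fun h => hx (h ▸ hc.1)
  have hvpos : 0 < ‖v‖ := norm_pos_iff.mpr hv0
  obtain ⟨s, hs0, hs⟩ := NormedField.exists_norm_lt 𝕜 (div_pos hxc hvpos)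
  have hsv : ‖s • v‖ ≤ ‖x - c‖ := by
    rw [norm_smul]
    exact ((lt_div_iff₀ hvpos).mp hs).le
  have hcsv : IsBestApprox (V : Set X) x (c + s • v) := by
    refine hc.of_norm_sub_le (V.add_mem hc.1 (V.smul_mem s hv)) ?_
    rw [← sub_sub]
    exact (hmax s).trans (max_le le_rfl hsv)
  have hsv0 : s • v = 0 := by simpa using (hV x).unique hcsv hc
  exact (smul_ne_zero (norm_pos_iff.mp hs0) hv0) hsv0

end IsChebyshevSubspace

end Chebyshev

section Bergmann

variable {A : Type*} [NonUnitalRing A] [StarRing A]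

/-- The Bergmann operator `B(x, y)` evaluated at `z`. -/
def bergmann (x y z : A) : A :=
  z - x * star y * z - z * star y * x + x * star y * z * star y * x

theorem star_mul_bergmann_eq_zero {a y b : A} (h : y * star a * b = b) (z : A) :
    star b * bergmann a y z = 0 := by
  have h' : star b * a * star y = star b := by simpa [mul_assoc] using congrArg star h
  calc star b * bergmann a y z
      = star b * z - star b * a * star y * z - star b * z * star y * a
          + star b * a * star y * z * star y * a := by
        simp only [bergmann, mul_assoc, mul_add, mul_sub]
    _ = 0 := by simp [h']

theorem bergmann_mul_star_eq_zero {a y b : A} (h : b * star a * y = b) (z : A) :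
    bergmann a y z * star b = 0 := by
  have h' : star y * a * star b = star b := by simpa [mul_assoc] using congrArg star h
  calc bergmann a y z * star b
      = z * star b - a * star y * z * star b - z * (star y * a * star b)
          + a * star y * z * (star y * a * star b) := by
        simp only [bergmann, mul_assoc, add_mul, sub_mul]
    _ = 0 := by simp [h']

end Bergmann

section JordanTriple

variable {A : Type*} [NonUnitalRing A] [StarRing A] [Module ℂ A]

/-- The Jordan triple product `{x, y, z}` of a *-algebra. -/
noncomputable def jordanTriple (x y z : A) : A := (2 : ℂ)⁻¹ • (x * star y * z + z * star y * x)

/-- Real subspaces closed under the triple product; a JB*-subtriple is a norm-closed complex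
subspace with this property. -/
def IsJordanSubtriple (F : Submodule ℝ A) : Prop :=
  ∀ x ∈ F, ∀ y ∈ F, ∀ z ∈ F, jordanTriple x y z ∈ F

/-- Brown–Pedersen quasi-invertibility of `a` in `F`: some Bergmann operator `B(a, y)` with `y ∈ F`
vanishes on `F`. -/
def IsBPQuasiInvertible (F : Submodule ℝ A) (a : A) : Prop :=
  ∃ y ∈ F, ∀ z ∈ F, bergmann a y z = 0

theorem jordanTriple_self (x y : A) : jordanTriple x y x = x * star y * x := by
  rw [jordanTriple, ← two_smul ℂ (x * star y * x), inv_smul_smul₀ two_ne_zero]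

theorem bergmann_eq_jordanTriple (x y z : A) :
    bergmann x y z =
      z - (2 : ℝ) • jordanTriple x y z + jordanTriple x (jordanTriple y z y) x := by
  have htwo : (2 : ℝ) • jordanTriple x y z = x * star y * z + z * star y * x := by
    rw [jordanTriple, ← Complex.coe_smul, Complex.ofReal_ofNat, smul_inv_smul₀ two_ne_zero]
  simp only [bergmann, htwo, jordanTriple_self, star_mul, star_star, mul_assoc, sub_sub]

namespace IsJordanSubtriple

variable {F : Submodule ℝ A} (hF : IsJordanSubtriple F)
include hF

theorem mul_star_mul_mem {x y : A} (hx : x ∈ F) (hy : y ∈ F) : x * star y * x ∈ F :=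
  jordanTriple_self x y ▸ hF x hx y hy x hx

theorem bergmann_mem {x y z : A} (hx : x ∈ F) (hy : y ∈ F) (hz : z ∈ F) : bergmann x y z ∈ F := by
  rw [bergmann_eq_jordanTriple]
  exact F.add_mem (F.sub_mem hz (F.smul_mem 2 (hF x hx y hy z hz)))
    (hF x hx _ (hF y hy z hz y hy) x hx)

theorem mul_star_mul_mul_star_mul_mem {b z : A} (hb : b ∈ F) (hz : z ∈ F) :
    b * star b * z * star b * b ∈ F := by
  simpa [mul_assoc] using hF.mul_star_mul_mem hb (hF.mul_star_mul_mem hb hz)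

-- For such `w` the two summands of `{a, a, w}` coincide.
theorem mul_star_mul_self_mem_of_intertwines {a w : A} (ha : a ∈ F) (hw : w ∈ F)
    (hwa : w * (star a * a) = a * star a * w) : w * (star a * a) ∈ F := by
  have := hF a ha a ha w hw
  rwa [jordanTriple, ← hwa, mul_assoc w, ← two_smul ℂ, inv_smul_smul₀ two_ne_zero] at this

theorem mul_mem_of_mem_closure_star_mul_self {a w p : A} (ha : a ∈ F)
    (hp : p ∈ Subsemigroup.closure {star a * a}) (hw : w ∈ F)
    (hwa : w * (star a * a) = a * star a * w) :
    w * p ∈ F ∧ w * p * (star a * a) = a * star a * (w * p) := by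
  induction hp using Subsemigroup.closure_induction generalizing w with
  | mem q hq =>
    obtain rfl := hq
    exact ⟨hF.mul_star_mul_self_mem_of_intertwines ha hw hwa, by rw [hwa, mul_assoc _ w, hwa]⟩
  | mul q r _ _ hq hr =>
    obtain ⟨hwq, hwqa⟩ := hq hw hwa
    rw [← mul_assoc]
    exact hr hwq hwqa

end IsJordanSubtriple

end JordanTriple

section Orthogonality

theorem norm_mul_star_mul_mul_star_mul_le {A : Type*} [NonUnitalSeminormedRing A]
    [StarAddMonoid A] [NormedStarGroup A] {b : A} (hb : ‖b‖ ≤ 1) (z : A) :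
    ‖b * star b * z * star b * b‖ ≤ ‖z‖ := by
  have hbb : ‖b * star b‖ ≤ 1 :=
    (norm_mul_le _ _).trans (by rw [norm_star]; exact mul_le_one₀ hb (norm_nonneg b) hb)
  have hbb' : ‖star b * b‖ ≤ 1 :=
    (norm_mul_le _ _).trans (by rw [norm_star]; exact mul_le_one₀ hb (norm_nonneg b) hb)
  rw [mul_assoc (b * star b * z)]
  exact (norm_mul_le_of_le (norm_mul_le_of_le hbb le_rfl) hbb').trans_eq (by ring)

variable {A : Type*} [NonUnitalCStarAlgebra A]

theorem norm_sub_eq_max_of_orthogonal {w v : A} (hwv : w * star v = 0) (hwv' : star w * v = 0) :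
    ‖w - v‖ = max ‖w‖ ‖v‖ := by
  have hvw : star v * w = 0 := by simpa using congrArg star hwv'
  have hsum : star (w - v) * (w - v) = star w * w + star v * v := by
    simp only [star_sub, sub_mul, mul_sub, hwv', hvw]
    abel
  have hprod : star w * w * (star v * v) = 0 := by
    rw [mul_assoc, ← mul_assoc w, hwv, zero_mul, mul_zero]
  have hsq : ‖w - v‖ * ‖w - v‖ = max (‖w‖ * ‖w‖) (‖v‖ * ‖v‖) := by
    simp only [← CStarRing.norm_star_mul_self, hsum]
    exact (IsSelfAdjoint.star_mul_self w).norm_add_eq_max (IsSelfAdjoint.star_mul_self v) hprod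
  rw [← Real.sqrt_mul_self (norm_nonneg (w - v)), hsq,
    Real.sqrt_monotone.map_max, Real.sqrt_mul_self (norm_nonneg w),
    Real.sqrt_mul_self (norm_nonneg v)]

theorem IsJordanSubtriple.mem_of_orthogonal {F : Submodule ℝ A} (hF : IsJordanSubtriple F)
    (hCheb : IsChebyshevSubspace F) {b v x : A} (hb : b ∈ F) (hb1 : ‖b‖ ≤ 1) (hv : v ∈ F)
    (hv0 : v ≠ 0) (hbv : star b * v = 0) (hvb : v * star b = 0)
    (hx : b * star b * x * star b * b = x) : x ∈ F := by
  obtain ⟨c, hc, hunique⟩ := hCheb x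
  have hsub : b * star b * (x - c) * star b * b = x - b * star b * c * star b * b := by
    rw [mul_sub, sub_mul, sub_mul, hx]
  have hc_fixed : b * star b * c * star b * b = c :=
    hunique _ <| hc.of_norm_sub_le (hF.mul_star_mul_mul_star_mul_mem hb hc.1) <|
      hsub ▸ norm_mul_star_mul_mul_star_mul_le hb1 (x - c)
  rw [hc_fixed] at hsub
  have hbv' : b * star v = 0 := by simpa using congrArg star hvb
  have horth : (x - c) * star v = 0 := by rw [← hsub, mul_assoc, hbv', mul_zero]
  have horth' : star (x - c) * v = 0 := by
    rw [← hsub]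
    simp only [star_mul, star_star, mul_assoc, hbv, mul_zero]
  refine hCheb.mem_of_norm_sub_smul_le_max hc hv hv0 fun s => ?_
  refine (norm_sub_eq_max_of_orthogonal ?_ ?_).le
  · rw [star_smul, mul_smul_comm, horth, smul_zero]
  · rw [mul_smul_comm, horth', smul_zero]

theorem IsJordanSubtriple.mul_star_mul_mem_of_not_isBPQuasiInvertible {F : Submodule ℝ A}
    (hF : IsJordanSubtriple F) (hCheb : IsChebyshevSubspace F) {a y b e : A} (ha : a ∈ F)
    (hBP : ¬ IsBPQuasiInvertible F a) (hy : y ∈ F) (hb : b ∈ F) (hb1 : ‖b‖ ≤ 1)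
    (hyb : y * star a * b = b) (hby : b * star a * y = b)
    (hbe : b * star b * e = e) (heb : e * star b * b = e) (u : A) :
    e * star u * e ∈ F := by
  simp only [IsBPQuasiInvertible, not_exists, not_and, not_forall] at hBP
  obtain ⟨z, hz, hv0⟩ := hBP y hy
  refine hF.mem_of_orthogonal hCheb hb hb1 (hF.bergmann_mem ha hy hz) hv0
    (star_mul_bergmann_eq_zero hyb z) (bergmann_mul_star_eq_zero hby z) ?_
  calc b * star b * (e * star u * e) * star b * b
      = b * star b * e * star u * (e * star b * b) := by simp only [mul_assoc]
    _ = e * star u * e := by rw [hbe, heb]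

end Orthogonality

section OddFunctionalCalculus

variable {A : Type*} [NonUnitalCStarAlgebra A]

theorem IsJordanSubtriple.mul_cfcₙ_mem {F : Submodule ℝ A} (hF : IsJordanSubtriple F)
    (hFc : IsClosed (F : Set A)) {a : A} (ha : a ∈ F) (f : ℝ → ℝ) :
    a * cfcₙ f (star a * a) ∈ F := by
  have hadjoin : (NonUnitalStarAlgebra.adjoin ℝ {star a * a}).toSubmodule ≤
      F.comap (LinearMap.mulLeft ℝ a) := by
    rw [NonUnitalStarAlgebra.adjoin_eq_span, Set.star_singleton, star_star_mul,
      Set.union_self, Submodule.span_le]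
    exact fun p hp => (hF.mul_mem_of_mem_closure_star_mul_self ha hp ha (mul_assoc _ _ _).symm).1
  have hclosed : IsClosed {p : A | a * p ∈ F} := hFc.preimage (continuous_const_mul a)
  exact closure_minimal hadjoin hclosed (cfcₙ_mem_elemental f (star a * a))

theorem quasispectrum_star_mul_self_nonneg (a : A) {t : ℝ}
    (ht : t ∈ quasispectrum ℝ (star a * a)) : 0 ≤ t := by
  let _ := CStarAlgebra.spectralOrder A
  let _ := CStarAlgebra.spectralOrderedRing A
  exact quasispectrum_nonneg_of_nonneg _ (star_mul_self_nonneg a) t ht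

variable (a : A) {f g k : ℝ → ℝ}

theorem star_mul_cfcₙ (f : ℝ → ℝ) :
    star (a * cfcₙ f (star a * a)) = cfcₙ f (star a * a) * star a := by
  rw [star_mul, (IsSelfAdjoint.cfcₙ (f := f) (a := star a * a)).star_eq]

theorem mul_cfcₙ_mul_star_mul_mul_cfcₙ (hf : Continuous f) (hf0 : f 0 = 0) (hg : Continuous g)
    (hg0 : g 0 = 0) :
    a * cfcₙ f (star a * a) * star a * (a * cfcₙ g (star a * a)) =
      a * cfcₙ (fun t => f t * (t * g t)) (star a * a) := by
  rw [cfcₙ_mul f (fun t => t * g t), cfcₙ_mul (fun t => t) g, cfcₙ_id' ℝ (star a * a)]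
  simp only [mul_assoc]

theorem mul_cfcₙ_mul_star_mul_cfcₙ_mul_mul_cfcₙ (hf : Continuous f) (hf0 : f 0 = 0)
    (hg : Continuous g) (hg0 : g 0 = 0) (hk : Continuous k) (hk0 : k 0 = 0) :
    a * cfcₙ f (star a * a) * star (a * cfcₙ g (star a * a)) * (a * cfcₙ k (star a * a)) =
      a * cfcₙ (fun t => f t * g t * (t * k t)) (star a * a) := by
  rw [star_mul_cfcₙ, ← mul_cfcₙ_mul_star_mul_mul_cfcₙ (f := fun t => f t * g t) a (by fun_prop)
    (by simp [hf0]) hk hk0, cfcₙ_mul f g]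
  simp only [mul_assoc]

theorem norm_mul_cfcₙ_le (hf : Continuous f) (hf0 : f 0 = 0) {r : ℝ} (hr : 0 ≤ r)
    (hle : ∀ t, 0 ≤ t → t * f t ^ 2 ≤ r ^ 2) : ‖a * cfcₙ f (star a * a)‖ ≤ r := by
  have hstar : star (a * cfcₙ f (star a * a)) * (a * cfcₙ f (star a * a)) =
      cfcₙ (fun t => f t * (t * f t)) (star a * a) := by
    rw [cfcₙ_mul f (fun t => t * f t), cfcₙ_mul (fun t => t) f, cfcₙ_id' ℝ (star a * a),
      star_mul_cfcₙ]
    simp only [mul_assoc]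
  refine le_of_sq_le_sq ?_ hr
  rw [sq, ← CStarRing.norm_star_mul_self, hstar]
  refine norm_cfcₙ_le fun t ht => ?_
  have ht0 := quasispectrum_star_mul_self_nonneg a ht
  rw [show f t * (t * f t) = t * f t ^ 2 by ring, Real.norm_of_nonneg (by positivity)]
  exact hle t ht0

theorem norm_sub_mul_cfcₙ_le (hf : Continuous f) (hf0 : f 0 = 0) {r : ℝ} (hr : 0 ≤ r)
    (hle : ∀ t, 0 ≤ t → t * (1 - f t) ^ 2 ≤ r ^ 2) : ‖a - a * cfcₙ f (star a * a)‖ ≤ r := by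
  have hstar : star (a - a * cfcₙ f (star a * a)) * (a - a * cfcₙ f (star a * a)) =
      cfcₙ (fun t => t - t * f t - f t * (t - t * f t)) (star a * a) := by
    rw [cfcₙ_sub (fun t => t - t * f t) (fun t => f t * (t - t * f t)),
      cfcₙ_mul f (fun t => t - t * f t), cfcₙ_sub (fun t => t) (fun t => t * f t),
      cfcₙ_mul (fun t => t) f, cfcₙ_id' ℝ (star a * a), star_sub, star_mul_cfcₙ]
    simp only [sub_mul, mul_sub, mul_assoc]
    abel
  refine le_of_sq_le_sq ?_ hr
  rw [sq, ← CStarRing.norm_star_mul_self, hstar]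
  refine norm_cfcₙ_le fun t ht => ?_
  have ht0 := quasispectrum_star_mul_self_nonneg a ht
  rw [show t - t * f t - f t * (t - t * f t) = t * (1 - f t) ^ 2 by ring,
    Real.norm_of_nonneg (by positivity)]
  exact hle t ht0

end OddFunctionalCalculus

section Cutoffs

variable {δ t : ℝ}

/-- The inverse `t⁻¹` for `δ ≤ t`, continued linearly to `0` at the origin. -/
noncomputable def truncInv (δ t : ℝ) : ℝ := t / max t δ ^ 2

/-- The inverse square root `(√t)⁻¹` for `2 * δ ≤ t`, cut off continuously to `0` for `t ≤ δ`. -/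
noncomputable def truncInvSqrt (δ t : ℝ) : ℝ := min 1 (max 0 (t / δ - 1)) / √(max t δ)

/-- The soft threshold `(t - δ)⁺ / t`, written so that it is visibly continuous at `0`. -/
noncomputable def softCutoff (δ t : ℝ) : ℝ := 1 - δ / max t δ

theorem continuous_truncInv (hδ : 0 < δ) : Continuous (truncInv δ) :=
  Continuous.div (by fun_prop) (by fun_prop) fun t => by positivity

theorem continuous_truncInvSqrt (hδ : 0 < δ) : Continuous (truncInvSqrt δ) :=
  Continuous.div (by fun_prop) (by fun_prop) fun t => by positivity

theorem continuous_softCutoff (hδ : 0 < δ) : Continuous (softCutoff δ) :=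
  continuous_const.sub <| Continuous.div (by fun_prop) (by fun_prop) fun t => by positivity

theorem truncInv_zero (δ : ℝ) : truncInv δ 0 = 0 := zero_div _

theorem mul_truncInv_of_le (hδ : 0 < δ) (h : δ ≤ t) : t * truncInv δ t = 1 := by
  have ht : t ≠ 0 := (hδ.trans_le h).ne'
  rw [truncInv, max_eq_left h]
  field_simp

theorem truncInvSqrt_of_le (hδ : 0 < δ) (h : t ≤ δ) : truncInvSqrt δ t = 0 := by
  have hramp : t / δ - 1 ≤ 0 := sub_nonpos.mpr ((div_le_one hδ).mpr h)
  rw [truncInvSqrt, max_eq_left hramp, min_eq_right zero_le_one, zero_div]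

theorem truncInvSqrt_sq (hδ : 0 < δ) (t : ℝ) :
    truncInvSqrt δ t ^ 2 = min 1 (max 0 (t / δ - 1)) ^ 2 / max t δ := by
  rw [truncInvSqrt, div_pow, Real.sq_sqrt (by positivity)]

theorem mul_truncInvSqrt_sq_of_le (hδ : 0 < δ) (h : 2 * δ ≤ t) : t * truncInvSqrt δ t ^ 2 = 1 := by
  have hramp : 1 ≤ t / δ - 1 := by
    rw [le_sub_iff_add_le, le_div_iff₀ hδ]
    linarith
  have ht : t ≠ 0 := by linarith
  rw [truncInvSqrt_sq hδ, max_eq_left (by linarith : δ ≤ t), min_eq_left (le_max_of_le_right hramp),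
    one_pow, mul_one_div_cancel ht]

theorem mul_truncInvSqrt_sq_le_one (hδ : 0 < δ) (t : ℝ) : t * truncInvSqrt δ t ^ 2 ≤ 1 := by
  have hramp : min 1 (max 0 (t / δ - 1)) ^ 2 ≤ 1 :=
    pow_le_one₀ (le_min zero_le_one (le_max_left _ _)) (min_le_left _ _)
  calc t * truncInvSqrt δ t ^ 2 ≤ max t δ * truncInvSqrt δ t ^ 2 := by
        gcongr
        exact le_max_left t δ
    _ = min 1 (max 0 (t / δ - 1)) ^ 2 := by
        rw [truncInvSqrt_sq hδ, mul_div_cancel₀ _ (by positivity)]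
    _ ≤ 1 := hramp

theorem softCutoff_of_le (hδ : 0 < δ) (h : t ≤ δ) : softCutoff δ t = 0 := by
  rw [softCutoff, max_eq_right h, div_self hδ.ne', sub_self]

theorem mul_one_sub_softCutoff_sq_le (hδ : 0 < δ) (t : ℝ) : t * (1 - softCutoff δ t) ^ 2 ≤ δ := by
  have hmax : 0 < max t δ := lt_max_of_lt_right hδ
  calc t * (1 - softCutoff δ t) ^ 2 ≤ max t δ * (δ / max t δ) ^ 2 := by
        rw [softCutoff, sub_sub_cancel]
        gcongr
        exact le_max_left t δ
    _ = δ * (δ / max t δ) := by field_simp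
    _ ≤ δ * 1 := by
        gcongr
        exact (div_le_one hmax).mpr (le_max_right t δ)
    _ = δ := mul_one δ

theorem mul_truncInv_mul_truncInvSqrt (hδ : 0 < δ) (t : ℝ) :
    t * truncInv δ t * truncInvSqrt δ t = truncInvSqrt δ t := by
  rcases le_total t δ with h | h
  · rw [truncInvSqrt_of_le hδ h, mul_zero]
  · rw [mul_truncInv_of_le hδ h, one_mul]

theorem mul_truncInvSqrt_sq_mul_softCutoff (hδ : 0 < δ) (t : ℝ) :
    t * truncInvSqrt δ t ^ 2 * softCutoff (2 * δ) t = softCutoff (2 * δ) t := by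
  rcases le_total t (2 * δ) with h | h
  · rw [softCutoff_of_le (by positivity) h, mul_zero]
  · rw [mul_truncInvSqrt_sq_of_le hδ h, one_mul]

end Cutoffs

section NotQuasiInvertible

variable {A : Type*} [NonUnitalCStarAlgebra A] {F : Submodule ℝ A}

theorem IsJordanSubtriple.exists_approx_with_local_inverse (hF : IsJordanSubtriple F)
    (hFc : IsClosed (F : Set A)) {a : A} (ha : a ∈ F) {ε : ℝ} (hε : 0 < ε) :
    ∃ y ∈ F, ∃ b ∈ F, ∃ e : A, ‖b‖ ≤ 1 ∧ y * star a * b = b ∧ b * star a * y = b ∧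
      b * star b * e = e ∧ e * star b * b = e ∧ ‖a - e‖ ≤ ε := by
  obtain ⟨δ, hδ, hδε⟩ : ∃ δ : ℝ, 0 < δ ∧ 2 * δ = ε ^ 2 := ⟨ε ^ 2 / 2, by positivity, by ring⟩
  have hμ := continuous_truncInv hδ
  have hμ0 := truncInv_zero δ
  have hκ := continuous_truncInvSqrt hδ
  have hκ0 := truncInvSqrt_of_le hδ hδ.le
  have hφ := continuous_softCutoff (δ := 2 * δ) (by positivity)
  have hφ0 := softCutoff_of_le (δ := 2 * δ) (t := 0) (by positivity) (by positivity)
  refine ⟨a * cfcₙ (truncInv δ) (star a * a), hF.mul_cfcₙ_mem hFc ha _,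
    a * cfcₙ (truncInvSqrt δ) (star a * a), hF.mul_cfcₙ_mem hFc ha _,
    a * cfcₙ (softCutoff (2 * δ)) (star a * a), ?_, ?_, ?_, ?_, ?_, ?_⟩
  · exact norm_mul_cfcₙ_le a hκ hκ0 zero_le_one fun t _ => by
      simpa using mul_truncInvSqrt_sq_le_one hδ t
  · rw [mul_cfcₙ_mul_star_mul_mul_cfcₙ a hμ hμ0 hκ hκ0]
    congr! 3 with t
    linear_combination mul_truncInv_mul_truncInvSqrt hδ t
  · rw [mul_cfcₙ_mul_star_mul_mul_cfcₙ a hκ hκ0 hμ hμ0]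
    congr! 3 with t
    linear_combination mul_truncInv_mul_truncInvSqrt hδ t
  · rw [mul_cfcₙ_mul_star_mul_cfcₙ_mul_mul_cfcₙ a hκ hκ0 hκ hκ0 hφ hφ0]
    congr! 3 with t
    linear_combination mul_truncInvSqrt_sq_mul_softCutoff hδ t
  · rw [mul_cfcₙ_mul_star_mul_cfcₙ_mul_mul_cfcₙ a hφ hφ0 hκ hκ0 hκ hκ0]
    congr! 3 with t
    linear_combination mul_truncInvSqrt_sq_mul_softCutoff hδ t
  · exact norm_sub_mul_cfcₙ_le a hφ hφ0 hε.le fun t _ =>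
      hδε ▸ mul_one_sub_softCutoff_sq_le (by positivity) t

theorem closure_Q_subset_of_not_BP_quasi_invertible_general (hF : IsJordanSubtriple F)
    (hCheb : IsChebyshevSubspace F) {a : A} (ha : a ∈ F) (hBP : ¬ IsBPQuasiInvertible F a) :
    closure {w : A | ∃ x : A, w = a * star x * a} ⊆ (F : Set A) := by
  have hFc := hCheb.isClosed
  refine closure_minimal ?_ hFc
  rintro _ ⟨u, rfl⟩
  have hclosed : IsClosed {e : A | e * star u * e ∈ F} :=
    hFc.preimage (f := fun e : A => e * star u * e) (by fun_prop)
  refine hclosed.closure_subset <|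
    (mem_closure_iff_nhds_basis nhds_basis_closedBall).mpr fun ε hε => ?_
  obtain ⟨y, hy, b, hb, e, hb1, hyb, hby, hbe, heb, hae⟩ :=
    hF.exists_approx_with_local_inverse hFc ha hε
  refine ⟨e, ?_, by rwa [mem_closedBall', dist_eq_norm]⟩
  exact hF.mul_star_mul_mem_of_not_isBPQuasiInvertible hCheb ha hBP hy hb hb1 hyb hby hbe heb u

end NotQuasiInvertible

/-- Let `A` be a C*-algebra and `F` a JB*-subtriple of `A` which is a
Chebyshev subspace of `A`. If `a ∈ F` is not Brown–Pedersen quasi-invertible in `F`,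
then the norm closure of `{a x* a : x ∈ A}` is contained in `F`. -/
theorem closure_Q_subset_of_not_BP_quasi_invertible
    {A : Type*} [NonUnitalNormedRing A] [StarRing A] [CStarRing A]
    [NormedSpace ℂ A] [IsScalarTower ℂ A A] [SMulCommClass ℂ A A]
    [StarModule ℂ A] [CompleteSpace A]
    (F : Submodule ℂ A) (hFclosed : IsClosed (F : Set A))
    (hFtriple : ∀ x ∈ F, ∀ y ∈ F, ∀ z ∈ F,
      (2 : ℂ)⁻¹ • (x * star y * z + z * star y * x) ∈ F)
    (hCheb : ∀ x : A, ∃! v : A, v ∈ F ∧ ‖x - v‖ = Metric.infDist x (F : Set A))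
    (a : A) (ha : a ∈ F)
    (hBP : ¬ ∃ y ∈ F, ∀ z ∈ F,
      z - a * star y * z - z * star y * a + a * star y * z * star y * a = 0) :
    closure {w : A | ∃ x : A, w = a * star x * a} ⊆ (F : Set A) := by
  let _ : NonUnitalCStarAlgebra A := { }
  exact closure_Q_subset_of_not_BP_quasi_invertible_general (F := F.restrictScalars ℝ)
    hFtriple hCheb ha hBP
end

section
/- Let A be a C*-algebra and let F be a JB*-subtriple of A which is a Chebyshev subspace of A. If a ∈ F is not Brown–Pedersen quasi-invertible in F, then the norm closure of {a x* a : x ∈ A} equals the norm closure of {a x* a : x ∈ F}; that is, the closed inner ideal of A generated by a coincides with the closed inner ideal of F generated by a. -/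
/-!
Let `p` be a cutoff of `a` away from zero, in the odd functional calculus of `a`. Inside `F` there
are a local quasi-inverse `y` of `a` and a contraction `h`, both cutoffs of `a`, such that every
`w = p x* p` is fixed by the contraction `E c = h h* c h* h` of `A`, which maps `F` into itself.
By uniqueness the best approximation `c` of `w` in `F` is fixed by `E` too, hence so is `w - c`.
Since `y` is not a quasi-inverse of `a`, some `z = B(a, y) z₀` with `z₀ ∈ F` is nonzero, and `z` is
orthogonal to `h`, hence to `w - c = E (w - c)`. The norm of a sum of orthogonal elements is the
maximum of the norms, so moving `c` by a multiple of `z` of norm `‖w - c‖` does not increase the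
distance to `w`; by uniqueness this forces `w = c ∈ F`. Finally `w = a (y w* y)* a`, and `p x* p`
tends to `a x* a` as the cutoff is removed.
-/

open Filter Topology

namespace JBTriple

section Algebra

variable {A : Type*} [NonUnitalRing A] [StarRing A]

/-- The Bergmann operator `B(x, y)` of the triple product `{a, b, c} = (a b* c + c b* a) / 2`. -/
def bergmann (x y z : A) : A :=
  z - x * star y * z - z * star y * x + x * star y * z * star y * x

/-- Orthogonality in the triple sense, under which the norm of a sum is the maximum of the norms. -/
def IsOrthogonal (x y : A) : Prop :=
  x * star y = 0 ∧ star y * x = 0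

theorem IsOrthogonal.symm {x y : A} (h : IsOrthogonal x y) : IsOrthogonal y x :=
  ⟨by simpa using congrArg star h.1, by simpa using congrArg star h.2⟩

theorem IsOrthogonal.mul_mul {x z : A} (h : IsOrthogonal x z) (d : A) :
    IsOrthogonal (x * d * x) z :=
  ⟨by rw [mul_assoc, h.1, mul_zero], by rw [mul_assoc, ← mul_assoc, h.2, zero_mul]⟩

theorem bergmann_isOrthogonal {a y h : A} (hay : h * star a * y = h) (hya : y * star a * h = h)
    (z : A) : IsOrthogonal (bergmann a y z) h := by
  have star_hay : star y * a * star h = star h := by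
    simpa [mul_assoc] using congrArg star hay
  have star_hya : star h * a * star y = star h := by
    simpa [mul_assoc] using congrArg star hya
  constructor
  · calc bergmann a y z * star h
        = z * star h - a * star y * z * star h - z * (star y * a * star h)
          + a * star y * z * (star y * a * star h) := by
          simp only [bergmann, add_mul, sub_mul, mul_assoc]
      _ = 0 := by rw [star_hay]; abel
  · calc star h * bergmann a y z
        = star h * z - star h * a * star y * z - star h * z * star y * a
          + star h * a * star y * z * star y * a := by
          simp only [bergmann, mul_add, mul_sub, mul_assoc]
      _ = 0 := by rw [star_hya]; abel

variable [Module ℂ A]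

/-- `F` is closed under the triple product `{x, y, z} = (x y* z + z y* x) / 2`; topological
closedness is not part of this notion. -/
def IsSubtriple (F : Submodule ℂ A) : Prop :=
  ∀ x ∈ F, ∀ y ∈ F, ∀ z ∈ F, (2 : ℂ)⁻¹ • (x * star y * z + z * star y * x) ∈ F

/-- `a` is Brown–Pedersen quasi-invertible in `F`: some Bergmann operator `B(a, y)` with `y ∈ F`
vanishes on `F`. -/
def IsBPQuasiInvertibleIn (F : Submodule ℂ A) (a : A) : Prop :=
  ∃ y ∈ F, ∀ z ∈ F, bergmann a y z = 0

namespace IsSubtriple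

variable {F : Submodule ℂ A}

theorem mul_star_mul_add_mem (hF : IsSubtriple F) {x y z : A} (hx : x ∈ F) (hy : y ∈ F)
    (hz : z ∈ F) : x * star y * z + z * star y * x ∈ F := by
  simpa [smul_smul] using F.smul_mem 2 (hF x hx y hy z hz)

theorem quadratic_mem (hF : IsSubtriple F) {x y : A} (hx : x ∈ F) (hy : y ∈ F) :
    x * star y * x ∈ F := by
  simpa [← two_smul ℂ, smul_smul] using hF x hx y hy x hx

theorem bergmann_mem (hF : IsSubtriple F) {x y z : A} (hx : x ∈ F) (hy : y ∈ F) (hz : z ∈ F) :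
    bergmann x y z ∈ F := by
  have bergmann_eq : bergmann x y z = z - (x * star y * z + z * star y * x)
      + x * star (y * star z * y) * x := by
    simp only [bergmann, star_mul, star_star, mul_assoc]
    abel
  rw [bergmann_eq]
  exact F.add_mem (F.sub_mem hz (hF.mul_star_mul_add_mem hx hy hz))
    (hF.quadratic_mem hx (hF.quadratic_mem hy hz))

theorem mul_star_mul_self_mem (hF : IsSubtriple F) {a v : A} (ha : a ∈ F)
    (hv : Commute v (star a * a)) (hav : a * v ∈ F) : a * v * (star a * a) ∈ F := by
  have triple_eq : a * star a * (a * v) = a * v * star a * a := by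
    simpa only [mul_assoc] using congrArg (a * ·) hv.eq.symm
  have triple_mem := hF (a * v) hav a ha a ha
  rw [triple_eq, ← two_smul ℂ, smul_smul] at triple_mem
  simpa [mul_assoc] using triple_mem

theorem mul_mem_of_mem_closure (hF : IsSubtriple F) {a u : A} (ha : a ∈ F)
    (hu : u ∈ Subsemigroup.closure {star a * a}) : a * u ∈ F := by
  -- Without a unit, `a * u ∈ F` is not an instance of the last clause, which carries the induction.
  suffices Commute u (star a * a) ∧ a * u ∈ F ∧
      ∀ v, Commute v (star a * a) → a * v ∈ F → a * v * u ∈ F from this.2.1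
  induction hu using Subsemigroup.closure_induction with
  | mem u hu =>
    obtain rfl := hu
    exact ⟨Commute.refl _, by simpa only [mul_assoc] using hF.quadratic_mem ha ha,
      fun v hv hav => hF.mul_star_mul_self_mem ha hv hav⟩
  | mul u u' _ _ ihu ihu' =>
    obtain ⟨comm_u, mem_u, mul_u⟩ := ihu
    obtain ⟨comm_u', -, mul_u'⟩ := ihu'
    refine ⟨comm_u.mul_left comm_u', ?_, fun v hv hav => ?_⟩
    · simpa only [mul_assoc] using mul_u' u comm_u mem_u
    · simpa only [mul_assoc] using
        mul_u' (v * u) (hv.mul_left comm_u) (by simpa only [mul_assoc] using mul_u v hv hav)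

end IsSubtriple

end Algebra

/-- `V` is a Chebyshev set: every point of the ambient space has exactly one best approximation
in `V`. -/
def IsChebyshev {X : Type*} [SeminormedAddCommGroup X] (V : Set X) : Prop :=
  ∀ x : X, ∃! v : X, v ∈ V ∧ ‖x - v‖ = Metric.infDist x V

namespace IsChebyshev

variable {X : Type*} [SeminormedAddCommGroup X] {V : Set X}

theorem exists_nearest (hV : IsChebyshev V) (x : X) :
    ∃ c ∈ V, ∀ d ∈ V, ‖x - d‖ ≤ ‖x - c‖ → d = c := by
  obtain ⟨c, ⟨hc, dist_c⟩, unique⟩ := hV x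
  refine ⟨c, hc, fun d hd hdc => unique d ⟨hd, le_antisymm (hdc.trans_eq dist_c) ?_⟩⟩
  rw [← dist_eq_norm]
  exact Metric.infDist_le_dist_of_mem hd

theorem exists_fixed_nearest (hV : IsChebyshev V) {E : X →+ X} (hE : ∀ x, ‖E x‖ ≤ ‖x‖)
    (hEV : Set.MapsTo E V V) {x : X} (hx : E x = x) :
    ∃ c ∈ V, E c = c ∧ ∀ d ∈ V, ‖x - d‖ ≤ ‖x - c‖ → d = c := by
  obtain ⟨c, hc, nearest⟩ := hV.exists_nearest x
  refine ⟨c, hc, nearest (E c) (hEV hc) ?_, nearest⟩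
  calc ‖x - E c‖ = ‖E (x - c)‖ := by rw [map_sub, hx]
    _ ≤ ‖x - c‖ := hE _

end IsChebyshev

section CStarAlgebra

variable {A : Type*} [NonUnitalCStarAlgebra A]

theorem IsOrthogonal.norm_add_eq_max {x y : A} (h : IsOrthogonal x y) :
    ‖x + y‖ = max ‖x‖ ‖y‖ := by
  have cross : star x * y = 0 := h.symm.2
  have squares_orthogonal : star x * x * (star y * y) = 0 := by
    rw [mul_assoc, ← mul_assoc x, h.1, zero_mul, mul_zero]
  have square_add : star (x + y) * (x + y) = star x * x + star y * y := by
    simp only [star_add, add_mul, mul_add, cross, h.2, zero_add, add_zero]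
  have max_squares : ‖x + y‖ * ‖x + y‖ = max (‖x‖ * ‖x‖) (‖y‖ * ‖y‖) := by
    simpa only [← square_add, CStarRing.norm_star_mul_self] using
      (IsSelfAdjoint.star_mul_self x).norm_add_eq_max (.star_mul_self y) squares_orthogonal
  rw [← mul_self_inj (norm_nonneg _) (by positivity), max_squares]
  rcases le_total ‖x‖ ‖y‖ with hxy | hxy <;>
    simp only [hxy, mul_self_le_mul_self (norm_nonneg _) hxy, max_eq_left, max_eq_right]

theorem eq_of_isOrthogonal_nearest {F : Submodule ℂ A} {c w z : A} (hc : c ∈ F)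
    (nearest : ∀ d ∈ F, ‖w - d‖ ≤ ‖w - c‖ → d = c) (hz : z ∈ F) (hz_ne : z ≠ 0)
    (h : IsOrthogonal (w - c) z) : w = c := by
  let t : ℂ := (‖w - c‖ / ‖z‖ : ℝ)
  have norm_tz : ‖-(t • z)‖ = ‖w - c‖ := by
    rw [norm_neg, norm_smul, Complex.norm_of_nonneg (by positivity),
      div_mul_cancel₀ _ (norm_ne_zero_iff.2 hz_ne)]
  have h_tz : IsOrthogonal (w - c) (-(t • z)) := by
    simp only [IsOrthogonal, star_neg, star_smul, mul_neg, neg_mul, mul_smul_comm, smul_mul_assoc,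
      h.1, h.2, smul_zero, neg_zero, and_self]
  have tz_eq_zero : t • z = 0 := by
    refine add_eq_left.1 (nearest (c + t • z) (F.add_mem hc (F.smul_mem t hz)) ?_)
    rw [← sub_sub, sub_eq_add_neg, h_tz.norm_add_eq_max, norm_tz, max_self]
  rw [← sub_eq_zero, ← norm_eq_zero, ← norm_tz, tz_eq_zero, neg_zero, norm_zero]

theorem mem_of_mul_star_mul_fixed {F : Submodule ℂ A} (hF : IsSubtriple F)
    (hCheb : IsChebyshev (F : Set A)) {a y h w : A} (ha : a ∈ F) (hy : y ∈ F) (hh : h ∈ F)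
    (norm_h : ‖h‖ ≤ 1) (hay : h * star a * y = h) (hya : y * star a * h = h)
    (hB : ∃ z ∈ F, bergmann a y z ≠ 0) (hw : h * star h * w * (star h * h) = w) : w ∈ F := by
  let E : A →+ A := (AddMonoidHom.mulRight (star h * h)).comp (AddMonoidHom.mulLeft (h * star h))
  have E_apply (x : A) : E x = h * (star h * x * star h) * h := by
    simp [E, mul_assoc]
  have E_contraction (x : A) : ‖E x‖ ≤ ‖x‖ :=
    calc ‖E x‖ ≤ ‖h * star h‖ * ‖x‖ * ‖star h * h‖ :=
          (norm_mul_le _ _).trans (by gcongr; exact norm_mul_le _ _)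
      _ = (‖h‖ * ‖h‖) * ‖x‖ * (‖h‖ * ‖h‖) := by
          rw [CStarRing.norm_self_mul_star, CStarRing.norm_star_mul_self]
      _ ≤ (1 * 1) * ‖x‖ * (1 * 1) := by gcongr
      _ = ‖x‖ := by ring
  have E_mapsTo : Set.MapsTo E F F := fun x hx => by
    simpa [E_apply, mul_assoc] using hF.quadratic_mem hh (hF.quadratic_mem hh hx)
  have E_w : E w = w := hw
  obtain ⟨c, hc, E_c, nearest⟩ := hCheb.exists_fixed_nearest E_contraction E_mapsTo E_w
  obtain ⟨z, hz, hBz⟩ := hB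
  have orthogonal : IsOrthogonal (w - c) (bergmann a y z) := by
    have E_sub : h * (star h * (w - c) * star h) * h = w - c := by
      rw [← E_apply, map_sub, E_w, E_c]
    rw [← E_sub]
    exact (bergmann_isOrthogonal hay hya z).symm.mul_mul _
  rw [eq_of_isOrthogonal_nearest hc nearest (hF.bergmann_mem ha hy hz) hBz orthogonal]
  exact hc

/-- The odd functional calculus of `a`, applying `s ↦ s * f (s ^ 2)` to the singular values of `a`
(a JB*-triple is closed under it, but not under `cfcₙ`). By the convention of `cfcₙ`, it is `0`
unless `f` is continuous on the quasispectrum of `star a * a` with `f 0 = 0`. -/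
noncomputable def oddCfc (a : A) (f : ℝ → ℝ) : A :=
  a * cfcₙ f (star a * a)

section oddCfc

variable (a : A) {f g k : ℝ → ℝ}

theorem IsSubtriple.oddCfc_mem {F : Submodule ℂ A} (hF : IsSubtriple F)
    (hFclosed : IsClosed (F : Set A)) {a : A} (ha : a ∈ F) (f : ℝ → ℝ) : oddCfc a f ∈ F := by
  let T : Submodule ℝ A := (F.restrictScalars ℝ).comap (LinearMap.mulLeft ℝ a)
  have isClosed_T : IsClosed (T : Set A) := hFclosed.preimage (continuous_const_mul a)
  have adjoin_le : (NonUnitalStarAlgebra.adjoin ℝ {star a * a}).toSubmodule ≤ T := by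
    rw [NonUnitalStarAlgebra.adjoin_eq_span, Submodule.span_le, Set.star_singleton,
      (IsSelfAdjoint.star_mul_self a).star_eq, Set.union_self]
    exact fun u hu => hF.mul_mem_of_mem_closure ha hu
  exact closure_minimal adjoin_le isClosed_T (cfcₙ_mem_elemental f (star a * a))

theorem cfcₙ_mul_self_mul_cfcₙ (b : A) (hf : Continuous f) (hf0 : f 0 = 0) (hg : Continuous g)
    (hg0 : g 0 = 0) (hb : IsSelfAdjoint b := by cfc_tac) :
    cfcₙ f b * b * cfcₙ g b = cfcₙ (fun t => f t * t * g t) b := by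
  rw [cfcₙ_mul (fun t => f t * t) g b, cfcₙ_mul f (fun t => t) b, cfcₙ_id' ℝ b]

theorem star_oddCfc (f : ℝ → ℝ) : star (oddCfc a f) = cfcₙ f (star a * a) * star a := by
  rw [oddCfc, star_mul, (cfcₙ_predicate (p := IsSelfAdjoint) f (star a * a)).star_eq]

theorem mul_star_oddCfc (f : ℝ → ℝ) : a * star (oddCfc a f) = oddCfc a f * star a := by
  rw [star_oddCfc, oddCfc, mul_assoc]

theorem star_oddCfc_mul (f : ℝ → ℝ) : star (oddCfc a f) * a = star a * oddCfc a f := by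
  rw [star_oddCfc, oddCfc, mul_assoc, ← mul_assoc (star a)]
  simpa only [cfcₙ_id' ℝ (star a * a)] using
    (cfcₙ_commute_cfcₙ f (fun t => t) (star a * a)).eq

theorem oddCfc_mul_star_mul_oddCfc (hf : Continuous f) (hf0 : f 0 = 0) (hg : Continuous g)
    (hg0 : g 0 = 0) :
    oddCfc a f * star a * oddCfc a g = oddCfc a (fun t => f t * t * g t) := by
  rw [oddCfc, oddCfc, oddCfc, ← cfcₙ_mul_self_mul_cfcₙ _ hf hf0 hg hg0]
  simp only [mul_assoc]

theorem oddCfc_mul_star_oddCfc_mul_oddCfc (hf : Continuous f) (hf0 : f 0 = 0) (hg : Continuous g)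
    (hg0 : g 0 = 0) (hk : Continuous k) (hk0 : k 0 = 0) :
    oddCfc a f * star (oddCfc a g) * oddCfc a k = oddCfc a (fun t => f t * g t * t * k t) := by
  rw [star_oddCfc, oddCfc, oddCfc, oddCfc,
    ← cfcₙ_mul_self_mul_cfcₙ (f := fun t => f t * g t) _ (hf.mul hg) (by simp [hf0]) hk hk0,
    cfcₙ_mul f g]
  simp only [mul_assoc]

theorem star_oddCfc_mul_oddCfc (hf : Continuous f) (hf0 : f 0 = 0) (hg : Continuous g)
    (hg0 : g 0 = 0) :
    star (oddCfc a f) * oddCfc a g = cfcₙ (fun t => f t * t * g t) (star a * a) := by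
  rw [star_oddCfc, oddCfc, ← cfcₙ_mul_self_mul_cfcₙ _ hf hf0 hg hg0]
  simp only [mul_assoc]

theorem star_mul_oddCfc (hf : Continuous f) (hf0 : f 0 = 0) :
    star a * oddCfc a f = cfcₙ (fun t => t * f t) (star a * a) := by
  rw [oddCfc, ← mul_assoc, cfcₙ_mul (fun t => t) f, cfcₙ_id' ℝ (star a * a)]

theorem norm_cfcₙ_star_mul_self_le {c : ℝ} (h : ∀ t, 0 ≤ t → |f t| ≤ c) :
    ‖cfcₙ f (star a * a)‖ ≤ c := by
  let _ := CStarAlgebra.spectralOrder A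
  have := CStarAlgebra.spectralOrderedRing A
  exact norm_cfcₙ_le fun t ht =>
    h t (quasispectrum_nonneg_of_nonneg _ (star_mul_self_nonneg a) t ht)

theorem norm_oddCfc_le (hf : Continuous f) (hf0 : f 0 = 0) {c : ℝ} (hc : 0 ≤ c)
    (h : ∀ t, 0 ≤ t → t * f t ^ 2 ≤ c ^ 2) : ‖oddCfc a f‖ ≤ c := by
  rw [← sq_le_sq₀ (norm_nonneg _) hc, sq, ← CStarRing.norm_star_mul_self,
    star_oddCfc_mul_oddCfc a hf hf0 hf hf0]
  refine norm_cfcₙ_star_mul_self_le a fun t ht => ?_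
  rw [mul_right_comm, ← sq, mul_comm, abs_of_nonneg (by positivity)]
  exact h t ht

theorem norm_oddCfc_sub_le (hf : Continuous f) (hf0 : f 0 = 0) {c : ℝ} (hc : 0 ≤ c)
    (h : ∀ t, 0 ≤ t → t * (f t - 1) ^ 2 ≤ c ^ 2) : ‖oddCfc a f - a‖ ≤ c := by
  have square_eq : star (oddCfc a f - a) * (oddCfc a f - a)
      = cfcₙ (fun t => f t * t * f t - t * f t - (t * f t - t)) (star a * a) := by
    rw [cfcₙ_sub (fun t => f t * t * f t - t * f t) (fun t => t * f t - t) _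
        (by fun_prop) (by simp) (by fun_prop) (by simp),
      cfcₙ_sub (fun t => f t * t * f t) (fun t => t * f t) _
        (by fun_prop) (by simp) (by fun_prop) (by simp),
      cfcₙ_sub (fun t => t * f t) (fun t => t) _, cfcₙ_id' ℝ (star a * a),
      ← star_oddCfc_mul_oddCfc a hf hf0 hf hf0, ← star_mul_oddCfc a hf hf0]
    simp only [star_sub, mul_sub, sub_mul, star_oddCfc_mul]
  rw [← sq_le_sq₀ (norm_nonneg _) hc, sq, ← CStarRing.norm_star_mul_self, square_eq]
  refine norm_cfcₙ_star_mul_self_le a fun t ht => ?_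
  rw [show f t * t * f t - t * f t - (t * f t - t) = t * (f t - 1) ^ 2 by ring,
    abs_of_nonneg (by positivity)]
  exact h t ht

end oddCfc

end CStarAlgebra

section Cutoff

/-- For `0 < ε`, the piecewise linear cutoff equal to `0` on `(-∞, ε]` and to `1` on `[2ε, ∞)`. -/
noncomputable def plateau (ε t : ℝ) : ℝ :=
  min 1 (max 0 (t / ε - 1))

/-- For `0 < ε`, a continuous function vanishing at `0` and equal to `t⁻¹` for `ε ≤ t`; it gives the
local quasi-inverse `oddCfc a (truncInv ε)` of `a`. -/
noncomputable def truncInv (ε t : ℝ) : ℝ :=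
  t / max t ε ^ 2

/-- For `0 < ε`, a continuous function vanishing for `t ≤ ε` and equal to `(√t)⁻¹` for `2ε ≤ t`; it
gives the contraction `oddCfc a (truncInvSqrt ε)`, which acts as a partial isometry on cutoffs of
`a`. -/
noncomputable def truncInvSqrt (ε t : ℝ) : ℝ :=
  √(truncInv ε t) * plateau ε t

variable {ε : ℝ}

theorem continuous_plateau (ε : ℝ) : Continuous (plateau ε) := by
  unfold plateau
  fun_prop

theorem plateau_nonneg (ε t : ℝ) : 0 ≤ plateau ε t := by
  simp [plateau]

theorem plateau_le_one (ε t : ℝ) : plateau ε t ≤ 1 := by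
  simp [plateau]

theorem plateau_of_le (hε : 0 < ε) {t : ℝ} (ht : t ≤ ε) : plateau ε t = 0 := by
  have : t / ε ≤ 1 := (div_le_one hε).2 ht
  simp [plateau, this]

theorem plateau_of_two_mul_le (hε : 0 < ε) {t : ℝ} (ht : 2 * ε ≤ t) : plateau ε t = 1 := by
  have : 1 ≤ t / ε - 1 := by rw [le_sub_iff_add_le, le_div_iff₀ hε]; linarith
  simp [plateau, this]

theorem plateau_zero (hε : 0 < ε) : plateau ε 0 = 0 :=
  plateau_of_le hε hε.le

theorem plateau_mul_plateau_two_mul (hε : 0 < ε) (t : ℝ) :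
    plateau ε t * plateau (2 * ε) t = plateau (2 * ε) t := by
  rcases le_total t (2 * ε) with ht | ht
  · simp [plateau_of_le (by positivity : 0 < 2 * ε) ht]
  · simp [plateau_of_two_mul_le hε ht]

theorem mul_plateau_sub_one_sq_le (hε : 0 < ε) {t : ℝ} (ht : 0 ≤ t) :
    t * (plateau ε t - 1) ^ 2 ≤ 2 * ε := by
  rcases le_total t (2 * ε) with h | h
  · have : (plateau ε t - 1) ^ 2 ≤ 1 := by
      rw [sq_le_one_iff_abs_le_one, abs_le]
      constructor <;> linarith [plateau_nonneg ε t, plateau_le_one ε t]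
    exact (mul_le_of_le_one_right ht this).trans h
  · simp [plateau_of_two_mul_le hε h, hε.le]

theorem continuous_truncInv (hε : 0 < ε) : Continuous (truncInv ε) := by
  have (t : ℝ) : max t ε ^ 2 ≠ 0 := (pow_pos (lt_max_of_lt_right hε) 2).ne'
  unfold truncInv
  fun_prop (disch := assumption)

theorem truncInv_zero (ε : ℝ) : truncInv ε 0 = 0 := by
  simp [truncInv]

theorem truncInv_of_le (hε : 0 < ε) {t : ℝ} (ht : ε ≤ t) : truncInv ε t = t⁻¹ := by
  have : t ≠ 0 := (hε.trans_le ht).ne'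
  rw [truncInv, max_eq_left ht]
  field_simp

theorem truncInv_mul_mul_plateau (hε : 0 < ε) (t : ℝ) :
    truncInv ε t * t * plateau ε t = plateau ε t := by
  rcases le_total t ε with ht | ht
  · simp [plateau_of_le hε ht]
  · rw [truncInv_of_le hε ht, inv_mul_cancel₀ (hε.trans_le ht).ne', one_mul]

theorem truncInv_mul_mul_plateau_two_mul (hε : 0 < ε) (t : ℝ) :
    truncInv ε t * t * plateau (2 * ε) t = plateau (2 * ε) t := by
  rw [← plateau_mul_plateau_two_mul hε, ← mul_assoc, truncInv_mul_mul_plateau hε]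

theorem continuous_truncInvSqrt (hε : 0 < ε) : Continuous (truncInvSqrt ε) :=
  (continuous_truncInv hε).sqrt.mul (continuous_plateau ε)

theorem truncInvSqrt_zero (hε : 0 < ε) : truncInvSqrt ε 0 = 0 := by
  simp [truncInvSqrt, plateau_zero hε]

theorem truncInv_mul_mul_truncInvSqrt (hε : 0 < ε) (t : ℝ) :
    truncInv ε t * t * truncInvSqrt ε t = truncInvSqrt ε t := by
  rw [truncInvSqrt, mul_left_comm, truncInv_mul_mul_plateau hε]

theorem mul_truncInvSqrt_sq (hε : 0 < ε) (t : ℝ) :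
    t * truncInvSqrt ε t ^ 2 = plateau ε t ^ 2 := by
  rcases le_total t ε with ht | ht
  · simp [truncInvSqrt, plateau_of_le hε ht]
  · have ht_pos : 0 < t := hε.trans_le ht
    rw [truncInvSqrt, truncInv_of_le hε ht, mul_pow, Real.sq_sqrt (by positivity),
      mul_inv_cancel_left₀ ht_pos.ne']

theorem truncInvSqrt_mul_mul_plateau (hε : 0 < ε) (t : ℝ) :
    truncInvSqrt ε t * truncInvSqrt ε t * t * plateau (2 * ε) t = plateau (2 * ε) t :=
  calc truncInvSqrt ε t * truncInvSqrt ε t * t * plateau (2 * ε) t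
      = t * truncInvSqrt ε t ^ 2 * plateau (2 * ε) t := by ring
    _ = plateau ε t * (plateau ε t * plateau (2 * ε) t) := by
        rw [mul_truncInvSqrt_sq hε]; ring
    _ = plateau (2 * ε) t := by
        rw [plateau_mul_plateau_two_mul hε, plateau_mul_plateau_two_mul hε]

end Cutoff

section CStarAlgebra

variable {A : Type*} [NonUnitalCStarAlgebra A]

theorem tendsto_oddCfc_plateau (a : A) :
    Tendsto (fun ε => oddCfc a (plateau ε)) (𝓝[>] 0) (𝓝 a) := by
  have norm_le : ∀ᶠ ε in 𝓝[>] (0 : ℝ), ‖oddCfc a (plateau ε) - a‖ ≤ √(2 * ε) := by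
    filter_upwards [self_mem_nhdsWithin] with ε (hε : 0 < ε)
    refine norm_oddCfc_sub_le a (continuous_plateau ε) (plateau_zero hε) (Real.sqrt_nonneg _)
      fun t ht => ?_
    rw [Real.sq_sqrt (by positivity)]
    exact mul_plateau_sub_one_sq_le hε ht
  have sqrt_tendsto : Tendsto (fun ε : ℝ => √(2 * ε)) (𝓝[>] 0) (𝓝 0) := by
    have : Continuous fun ε : ℝ => √(2 * ε) := by fun_prop
    simpa using (this.tendsto 0).mono_left nhdsWithin_le_nhds
  exact tendsto_iff_norm_sub_tendsto_zero.2
    (squeeze_zero' (.of_forall fun _ => norm_nonneg _) norm_le sqrt_tendsto)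

theorem norm_oddCfc_truncInvSqrt_le_one (a : A) {ε : ℝ} (hε : 0 < ε) :
    ‖oddCfc a (truncInvSqrt ε)‖ ≤ 1 := by
  refine norm_oddCfc_le a (continuous_truncInvSqrt hε) (truncInvSqrt_zero hε) zero_le_one
    fun t _ => ?_
  rw [mul_truncInvSqrt_sq hε]
  exact pow_le_pow_left₀ (plateau_nonneg ε t) (plateau_le_one ε t) 2

theorem oddCfc_truncInv_mul_star_mul (a : A) {ε : ℝ} (hε : 0 < ε) {f : ℝ → ℝ} (hf : Continuous f)
    (hf0 : f 0 = 0) (h : ∀ t, truncInv ε t * t * f t = f t) :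
    oddCfc a (truncInv ε) * star a * oddCfc a f = oddCfc a f := by
  rw [oddCfc_mul_star_mul_oddCfc a (continuous_truncInv hε) (truncInv_zero ε) hf hf0, funext h]

theorem oddCfc_mul_star_mul_truncInv (a : A) {ε : ℝ} (hε : 0 < ε) {f : ℝ → ℝ} (hf : Continuous f)
    (hf0 : f 0 = 0) (h : ∀ t, truncInv ε t * t * f t = f t) :
    oddCfc a f * star a * oddCfc a (truncInv ε) = oddCfc a f := by
  rw [oddCfc_mul_star_mul_oddCfc a hf hf0 (continuous_truncInv hε) (truncInv_zero ε)]
  congr 1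
  funext t
  linear_combination h t

theorem truncInvSqrt_mul_star_mul_plateau (a : A) {ε : ℝ} (hε : 0 < ε) :
    oddCfc a (truncInvSqrt ε) * star (oddCfc a (truncInvSqrt ε)) * oddCfc a (plateau (2 * ε)) =
      oddCfc a (plateau (2 * ε)) := by
  rw [oddCfc_mul_star_oddCfc_mul_oddCfc a (continuous_truncInvSqrt hε) (truncInvSqrt_zero hε)
    (continuous_truncInvSqrt hε) (truncInvSqrt_zero hε) (continuous_plateau _)
    (plateau_zero (by positivity)), funext (truncInvSqrt_mul_mul_plateau hε)]

theorem plateau_mul_star_mul_truncInvSqrt (a : A) {ε : ℝ} (hε : 0 < ε) :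
    oddCfc a (plateau (2 * ε)) * star (oddCfc a (truncInvSqrt ε)) * oddCfc a (truncInvSqrt ε) =
      oddCfc a (plateau (2 * ε)) := by
  rw [oddCfc_mul_star_oddCfc_mul_oddCfc a (continuous_plateau _) (plateau_zero (by positivity))
    (continuous_truncInvSqrt hε) (truncInvSqrt_zero hε) (continuous_truncInvSqrt hε)
    (truncInvSqrt_zero hε)]
  congr 1
  funext t
  linear_combination truncInvSqrt_mul_mul_plateau hε t

theorem plateau_mul_star_mul_plateau_mem {F : Submodule ℂ A} (hF : IsSubtriple F)
    (hFclosed : IsClosed (F : Set A)) (hCheb : IsChebyshev (F : Set A)) {a : A} (ha : a ∈ F)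
    (hBP : ¬ IsBPQuasiInvertibleIn F a) {ε : ℝ} (hε : 0 < ε) (x : A) :
    oddCfc a (plateau (2 * ε)) * star x * oddCfc a (plateau (2 * ε)) ∈ F := by
  have hy : oddCfc a (truncInv ε) ∈ F := hF.oddCfc_mem hFclosed ha _
  have hB : ∃ z ∈ F, bergmann a (oddCfc a (truncInv ε)) z ≠ 0 := by
    simp only [IsBPQuasiInvertibleIn, not_exists, not_and, not_forall] at hBP
    simpa only [exists_prop] using hBP _ hy
  refine mem_of_mul_star_mul_fixed hF hCheb ha hy (hF.oddCfc_mem hFclosed ha (truncInvSqrt ε))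
    (norm_oddCfc_truncInvSqrt_le_one a hε) ?_ ?_ hB ?_
  · exact oddCfc_mul_star_mul_truncInv a hε (continuous_truncInvSqrt hε) (truncInvSqrt_zero hε)
      (truncInv_mul_mul_truncInvSqrt hε)
  · exact oddCfc_truncInv_mul_star_mul a hε (continuous_truncInvSqrt hε) (truncInvSqrt_zero hε)
      (truncInv_mul_mul_truncInvSqrt hε)
  · have left := truncInvSqrt_mul_star_mul_plateau a hε
    have right := plateau_mul_star_mul_truncInvSqrt a hε
    generalize oddCfc a (plateau (2 * ε)) = p at left right ⊢
    generalize oddCfc a (truncInvSqrt ε) = h at left right ⊢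
    calc h * star h * (p * star x * p) * (star h * h)
        = h * star h * p * star x * (p * star h * h) := by simp only [mul_assoc]
      _ = p * star x * p := by rw [left, right]

theorem exists_plateau_mul_star_mul_plateau_eq {F : Submodule ℂ A} (hF : IsSubtriple F)
    (hFclosed : IsClosed (F : Set A)) (hCheb : IsChebyshev (F : Set A)) {a : A} (ha : a ∈ F)
    (hBP : ¬ IsBPQuasiInvertibleIn F a) {ε : ℝ} (hε : 0 < ε) (x : A) :
    ∃ v ∈ F, oddCfc a (plateau (2 * ε)) * star x * oddCfc a (plateau (2 * ε)) =
      a * star v * a := by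
  have hw := plateau_mul_star_mul_plateau_mem hF hFclosed hCheb ha hBP hε x
  have hy : oddCfc a (truncInv ε) ∈ F := hF.oddCfc_mem hFclosed ha _
  refine ⟨_, hF.quadratic_mem hy hw, ?_⟩
  have plateau_zero' : plateau (2 * ε) 0 = 0 := plateau_zero (by positivity)
  have left := oddCfc_truncInv_mul_star_mul a hε (continuous_plateau _) plateau_zero'
    (truncInv_mul_mul_plateau_two_mul hε)
  have right := oddCfc_mul_star_mul_truncInv a hε (continuous_plateau _) plateau_zero'
    (truncInv_mul_mul_plateau_two_mul hε)
  have comm_left := mul_star_oddCfc a (truncInv ε)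
  have comm_right := star_oddCfc_mul a (truncInv ε)
  generalize oddCfc a (plateau (2 * ε)) = p at left right ⊢
  generalize oddCfc a (truncInv ε) = y at left right comm_left comm_right ⊢
  calc p * star x * p
      = (y * star a * p) * star x * (p * star a * y) := by rw [left, right]
    _ = (a * star y) * (p * star x * p) * (star y * a) := by
        rw [comm_left, comm_right]; simp only [mul_assoc]
    _ = a * star (y * star (p * star x * p) * y) * a := by
        simp only [star_mul, star_star, mul_assoc]

end CStarAlgebra

end JBTriple

/-- Let `A` be a C*-algebra and `F` a JB*-subtriple of `A` which is a
Chebyshev subspace of `A`. If `a ∈ F` is not Brown–Pedersen quasi-invertible in `F`,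
then the closed inner ideal of `A` generated by `a` coincides with the closed inner
ideal of `F` generated by `a`:
`closure {a x* a : x ∈ A} = closure {a x* a : x ∈ F}`. -/
theorem inner_ideal_eq_of_not_BP_quasi_invertible
    {A : Type*} [NonUnitalNormedRing A] [StarRing A] [CStarRing A]
    [NormedSpace ℂ A] [IsScalarTower ℂ A A] [SMulCommClass ℂ A A]
    [StarModule ℂ A] [CompleteSpace A]
    (F : Submodule ℂ A) (hFclosed : IsClosed (F : Set A))
    (hFtriple : ∀ x ∈ F, ∀ y ∈ F, ∀ z ∈ F,
      (2 : ℂ)⁻¹ • (x * star y * z + z * star y * x) ∈ F)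
    (hCheb : ∀ x : A, ∃! v : A, v ∈ F ∧ ‖x - v‖ = Metric.infDist x (F : Set A))
    (a : A) (ha : a ∈ F)
    (hBP : ¬ ∃ y ∈ F, ∀ z ∈ F,
      z - a * star y * z - z * star y * a + a * star y * z * star y * a = 0) :
    closure {w : A | ∃ x : A, w = a * star x * a} =
      closure {w : A | ∃ x ∈ F, w = a * star x * a} := by
  let _ : NonUnitalCStarAlgebra A := {}
  refine Set.Subset.antisymm (closure_minimal ?_ isClosed_closure) (closure_mono ?_)
  · rintro _ ⟨x, rfl⟩
    have cutoff_tendsto := JBTriple.tendsto_oddCfc_plateau a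
    refine mem_closure_of_tendsto ((cutoff_tendsto.mul_const (star x)).mul cutoff_tendsto) ?_
    filter_upwards [self_mem_nhdsWithin] with ε (hε : 0 < ε)
    simpa only [mul_div_cancel₀ ε two_ne_zero] using
      JBTriple.exists_plateau_mul_star_mul_plateau_eq hFtriple hFclosed hCheb ha hBP
        (half_pos hε) x
  · rintro _ ⟨x, -, rfl⟩
    exact ⟨x, rfl⟩
end

section
/- Let A be a C*-algebra and let F be a JB*-subtriple of A which is a Chebyshev subspace of A. If no element of F is Brown–Pedersen quasi-invertible in F, then F is an inner ideal of A; that is, a x* b + b x* a ∈ F for all a, b ∈ F and all x ∈ A. -/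
/-!
Let `p, f, e ∈ F` come from the odd functional calculus of some `a ∈ F`, with `f` acting as a
local unit on `p` and `e` acting as a local unit on `f`. Given `x` of the form `p s* p`, the
nonexpansive map `v ↦ f f* v f* f` preserves `F` and fixes `x`, so it fixes the point `v ∈ F`
nearest to `x`; hence `x - v` is orthogonal to every `B(e, e)(z)`. Orthogonal elements satisfy
`‖y - c‖ = max ‖y‖ ‖c‖`, so if some `c = B(e, e)(z) ∈ F` is not `0`, then a nonzero multiple of it
can be added to `v` without leaving the set of nearest points, unless `x = v ∈ F`. Since `a` is a
limit of rescaled elements `p`, this gives `a s* a ∈ F`, and polarization finishes the proof.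
-/

open Metric

section NearestPoints

/-- `v` is a best approximation of `x` in `V`. -/
def IsNearestPoint {X : Type*} [PseudoMetricSpace X] (V : Set X) (x v : X) : Prop :=
  v ∈ V ∧ dist x v = infDist x V

/-- Chebyshev sets: every point has exactly one best approximation. Closedness, usually part of
the definition of a Chebyshev subspace, follows (`IsChebyshev.isClosed`). -/
def IsChebyshev {X : Type*} [PseudoMetricSpace X] (V : Set X) : Prop :=
  ∀ x, ∃! v, IsNearestPoint V x v

lemma IsNearestPoint.of_dist_le {X : Type*} [PseudoMetricSpace X] {V : Set X} {x v w : X}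
    (hv : IsNearestPoint V x v) (hw : w ∈ V) (h : dist x w ≤ dist x v) : IsNearestPoint V x w :=
  ⟨hw, (h.trans_eq hv.2).antisymm (infDist_le_dist_of_mem hw)⟩

lemma IsChebyshev.isClosed {X : Type*} [MetricSpace X] {V : Set X} (hV : IsChebyshev V) :
    IsClosed V := by
  refine isClosed_of_closure_subset fun x hx ↦ ?_
  obtain ⟨v, ⟨hv, hxv⟩, -⟩ := hV x
  rw [infDist_zero_of_mem_closure hx, dist_eq_zero] at hxv
  rwa [hxv]

lemma IsChebyshev.isFixedPt_of_isNearestPoint {X : Type*} [PseudoMetricSpace X] {V : Set X}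
    (hV : IsChebyshev V) {T : X → X} (hT : LipschitzWith 1 T) (hTV : Set.MapsTo T V V) {x v : X}
    (hx : T.IsFixedPt x) (hv : IsNearestPoint V x v) : T.IsFixedPt v := by
  refine (hV x).unique (hv.of_dist_le (hTV hv.1) ?_) hv
  calc dist x (T v) = dist (T x) (T v) := by rw [hx.eq]
    _ ≤ dist x v := by simpa using hT.dist_le_mul x v

lemma IsChebyshev.eq_zero_of_norm_sub_le {E : Type*} [SeminormedAddCommGroup E]
    {V : AddSubgroup E} (hV : IsChebyshev (V : Set E)) {x v c : E}
    (hv : IsNearestPoint (V : Set E) x v) (hc : c ∈ V) (h : ‖x - v - c‖ ≤ ‖x - v‖) : c = 0 := by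
  have hvc : IsNearestPoint (V : Set E) x (v + c) :=
    hv.of_dist_le (V.add_mem hv.1 hc) (by simpa only [dist_eq_norm, sub_sub] using h)
  simpa using (hV x).unique hvc hv

end NearestPoints

lemma mem_of_forall_exists_norm_smul_sub_le {E : Type*} [SeminormedAddCommGroup E]
    [NormedSpace ℝ E] {s : Set E} (hs : IsClosed s) (hsmul : ∀ r : ℝ, ∀ p ∈ s, r • p ∈ s)
    {a : E} {C : ℝ} (h : ∀ r : ℝ, ∃ p ∈ s, ‖r • a - p‖ ≤ C) : a ∈ s := by
  rw [← hs.closure_eq, Metric.mem_closure_iff]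
  intro ε hε
  obtain ⟨r, hr⟩ := exists_gt (max 0 (C / ε))
  obtain ⟨hr₀, hCr⟩ := max_lt_iff.mp hr
  obtain ⟨p, hp, hap⟩ := h r
  refine ⟨r⁻¹ • p, hsmul _ p hp, ?_⟩
  calc dist a (r⁻¹ • p) = ‖r⁻¹ • (r • a - p)‖ := by
        rw [dist_eq_norm, smul_sub, inv_smul_smul₀ hr₀.ne']
    _ = ‖r • a - p‖ / r := by
        rw [norm_smul, norm_inv, Real.norm_of_nonneg hr₀.le, inv_mul_eq_div]
    _ < ε := by
        rw [div_lt_iff₀ hr₀]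
        exact hap.trans_lt ((div_lt_iff₀' hε).mp hCr)

lemma lipschitzWith_mul_mul {A : Type*} [NonUnitalSeminormedRing A] {s t : A} (hs : ‖s‖ ≤ 1)
    (ht : ‖t‖ ≤ 1) : LipschitzWith 1 fun x ↦ s * x * t := by
  refine LipschitzWith.mk_one fun x y ↦ ?_
  simp only [dist_eq_norm]
  calc ‖s * x * t - s * y * t‖ = ‖s * (x - y) * t‖ := by rw [mul_sub, sub_mul]
    _ ≤ ‖s‖ * ‖x - y‖ * ‖t‖ := norm_mul₃_le
    _ ≤ 1 * ‖x - y‖ * 1 := by gcongr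
    _ = ‖x - y‖ := by rw [one_mul, mul_one]

section Orthogonality

/-- Orthogonality of elements of a C⋆-algebra in the sense of JB⋆-triples. -/
def IsTripleOrthogonal {A : Type*} [Mul A] [Star A] [Zero A] (a b : A) : Prop :=
  star a * b = 0 ∧ b * star a = 0

lemma IsTripleOrthogonal.smul_right {R A : Type*} [NonUnitalNonAssocSemiring A] [Star A]
    [Monoid R] [DistribMulAction R A] [IsScalarTower R A A] [SMulCommClass R A A] {a b : A}
    (h : IsTripleOrthogonal a b) (r : R) : IsTripleOrthogonal a (r • b) :=
  ⟨by rw [mul_smul_comm, h.1, smul_zero], by rw [smul_mul_assoc, h.2, smul_zero]⟩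

lemma IsTripleOrthogonal.mul_mul_left {A : Type*} [NonUnitalSemiring A] [StarRing A] {a b : A}
    (h : IsTripleOrthogonal a b) (s : A) : IsTripleOrthogonal (a * s * a) b := by
  constructor
  · rw [star_mul, star_mul, mul_assoc, mul_assoc, h.1, mul_zero, mul_zero]
  · rw [star_mul, ← mul_assoc, h.2, zero_mul]

variable {A : Type*} [NonUnitalCStarAlgebra A]

lemma IsTripleOrthogonal.norm_sub_eq_max {a b : A} (h : IsTripleOrthogonal a b) :
    ‖a - b‖ = max ‖a‖ ‖b‖ := by
  have hba : star b * a = 0 := by simpa using congrArg star h.1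
  have hab : a * star b = 0 := by simpa using congrArg star h.2
  have hsq : star (a - b) * (a - b) = star a * a + star b * b := by
    simp only [star_sub, sub_mul, mul_sub, h.1, hba]
    abel
  have hmul : star a * a * (star b * b) = 0 := by
    rw [mul_assoc, ← mul_assoc a, hab, zero_mul, mul_zero]
  have hnorm : ‖a - b‖ * ‖a - b‖ = max ‖a‖ ‖b‖ * max ‖a‖ ‖b‖ := by
    rw [← CStarRing.norm_star_mul_self, hsq,
      (IsSelfAdjoint.star_mul_self a).norm_add_eq_max (.star_mul_self b) hmul,
      CStarRing.norm_star_mul_self, CStarRing.norm_star_mul_self]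
    exact (MonotoneOn.map_max (s := Set.Ici (0 : ℝ)) (f := fun r ↦ r * r)
      (fun _ hx _ _ hxy ↦ mul_self_le_mul_self hx hxy) (norm_nonneg a) (norm_nonneg b)).symm
  exact (mul_self_inj_of_nonneg (norm_nonneg _) (by positivity)).mp hnorm

lemma IsChebyshev.eq_of_isTripleOrthogonal {F : Submodule ℝ A} (hF : IsChebyshev (F : Set A))
    {x v c : A} (hv : IsNearestPoint (F : Set A) x v) (hc : c ∈ F) (hc₀ : c ≠ 0)
    (h : IsTripleOrthogonal (x - v) c) : x = v := by
  have hcpos : 0 < ‖c‖ := norm_pos_iff.mpr hc₀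
  have hle : ‖x - v - (‖x - v‖ / ‖c‖) • c‖ ≤ ‖x - v‖ := by
    rw [(h.smul_right _).norm_sub_eq_max, norm_smul, Real.norm_of_nonneg (by positivity),
      div_mul_cancel₀ _ hcpos.ne', max_self]
  have hzero : (‖x - v‖ / ‖c‖) • c = 0 :=
    IsChebyshev.eq_zero_of_norm_sub_le (V := F.toAddSubgroup) hF hv (F.smul_mem _ hc) hle
  simpa [hc₀, sub_eq_zero] using hzero

end Orthogonality

section Triples

/-- `e e⋆` and `e⋆ e` act as units on `f` from the left and from the right. For a partial isometry
`e` this says that `f` lies in the Peirce 2-space of `e`. -/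
def IsLocalUnit {A : Type*} [Mul A] [Star A] (e f : A) : Prop :=
  e * star e * f = f ∧ f * star e * e = f

lemma IsLocalUnit.mul_mul {A : Type*} [Semigroup A] [Star A] {e p : A} (h : IsLocalUnit e p)
    (s : A) : IsLocalUnit e (p * s * p) :=
  ⟨by rw [← mul_assoc, ← mul_assoc, h.1], by rw [mul_assoc, mul_assoc, ← mul_assoc p, h.2]⟩

variable {A : Type*} [NonUnitalRing A] [StarRing A]

lemma IsLocalUnit.isTripleOrthogonal_bergmann {e f : A} (h : IsLocalUnit e f) (z : A) :
    IsTripleOrthogonal f (bergmann e e z) := by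
  have hl : star f * e * star e = star f := by simpa [mul_assoc] using congrArg star h.1
  have hr : star e * e * star f = star f := by simpa [mul_assoc] using congrArg star h.2
  constructor
  · simp only [bergmann, mul_add, mul_sub, ← mul_assoc, hl]
    abel
  · simp only [mul_assoc] at hr
    simp only [bergmann, add_mul, sub_mul, mul_assoc, hr]
    abel

/-- Real subspaces closed under the triple product `{x, y, z}`; the factor `1 / 2` is dropped. -/
def IsSubtriple [Module ℝ A] (F : Submodule ℝ A) : Prop :=
  ∀ x ∈ F, ∀ y ∈ F, ∀ z ∈ F, x * star y * z + z * star y * x ∈ F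

variable [Module ℝ A] {F : Submodule ℝ A}

lemma IsSubtriple.mul_star_mul_mem (hF : IsSubtriple F) {x y : A} (hx : x ∈ F) (hy : y ∈ F) :
    x * star y * x ∈ F := by
  have h := hF x hx y hy x hx
  rw [← two_smul ℝ] at h
  exact (F.smul_mem_iff two_ne_zero).mp h

lemma IsSubtriple.bergmann_mem (hF : IsSubtriple F) {x y z : A} (hx : x ∈ F) (hy : y ∈ F)
    (hz : z ∈ F) : bergmann x y z ∈ F := by
  have hQQ : x * star (y * star z * y) * x ∈ F :=
    hF.mul_star_mul_mem hx (hF.mul_star_mul_mem hy hz)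
  have h := F.add_mem (F.sub_mem hz (hF x hx y hy z hz)) hQQ
  simpa only [bergmann, star_mul, star_star, mul_assoc, sub_sub] using h

end Triples

section ChebyshevSubtriples

variable {A : Type*} [NonUnitalCStarAlgebra A] {F : Submodule ℝ A}

lemma IsSubtriple.mem_of_isLocalUnit (hF : IsSubtriple F) (hC : IsChebyshev (F : Set A))
    {e f x : A} (he : e ∈ F) (hf : f ∈ F) (hf₁ : ‖f‖ ≤ 1) (hef : IsLocalUnit e f)
    (hfx : IsLocalUnit f x) (hB : ∃ z ∈ F, bergmann e e z ≠ 0) : x ∈ F := by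
  obtain ⟨v, hv, -⟩ := hC x
  let T : A → A := fun w ↦ f * star f * w * (star f * f)
  have hT_eq (w : A) : T w = f * (star f * w * star f) * f := by simp only [T, mul_assoc]
  have hT : LipschitzWith 1 T := by
    have hf₁' : ‖f‖ * ‖f‖ ≤ 1 := mul_le_one₀ hf₁ (norm_nonneg f) hf₁
    exact lipschitzWith_mul_mul (CStarRing.norm_self_mul_star.trans_le hf₁')
      (CStarRing.norm_star_mul_self.trans_le hf₁')
  have hTF : Set.MapsTo T F F := fun w hw ↦ by
    have h := hF.mul_star_mul_mem hf (hF.mul_star_mul_mem hf hw)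
    simpa only [hT_eq, star_mul, star_star, mul_assoc, SetLike.mem_coe] using h
  have hTx : T.IsFixedPt x := by
    simp only [Function.IsFixedPt, T, hfx.1, ← mul_assoc, hfx.2]
  have hTv : T.IsFixedPt v := hC.isFixedPt_of_isNearestPoint hT hTF hTx hv
  have hxv : x - v = f * (star f * (x - v) * star f) * f := by
    calc x - v = T x - T v := by rw [hTx.eq, hTv.eq]
      _ = T (x - v) := by simp only [T, mul_sub, sub_mul]
      _ = f * (star f * (x - v) * star f) * f := hT_eq _
  obtain ⟨z, hz, hz₀⟩ := hB
  have horth : IsTripleOrthogonal (x - v) (bergmann e e z) := by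
    rw [hxv]
    exact (hef.isTripleOrthogonal_bergmann z).mul_mul_left _
  rw [hC.eq_of_isTripleOrthogonal hv (hF.bergmann_mem he he hz) hz₀ horth]
  exact hv.1

end ChebyshevSubtriples

section OddFunctionalCalculus

/-- The elements `s` for which both `s` and `star s` multiply `M` into itself from the right. -/
def rightStarStabilizer {R A : Type*} [CommSemiring R] [StarRing R] [NonUnitalSemiring A]
    [StarRing A] [Module R A] [StarModule R A] [SMulCommClass R A A] (M : Submodule R A) :
    NonUnitalStarSubalgebra R A where
  carrier := {s | ∀ x ∈ M, x * s ∈ M ∧ x * star s ∈ M}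
  add_mem' {s t} hs ht x hx := by
    rw [star_add, mul_add, mul_add]
    exact ⟨M.add_mem (hs x hx).1 (ht x hx).1, M.add_mem (hs x hx).2 (ht x hx).2⟩
  zero_mem' x _ := by simp
  mul_mem' {s t} hs ht x hx := by
    rw [star_mul, ← mul_assoc, ← mul_assoc]
    exact ⟨(ht _ (hs x hx).1).1, (hs _ (ht x hx).2).2⟩
  smul_mem' r s hs x hx := by
    rw [star_smul, mul_smul_comm, mul_smul_comm]
    exact ⟨M.smul_mem _ (hs x hx).1, M.smul_mem _ (hs x hx).2⟩
  star_mem' {s} hs x hx := by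
    rw [star_star]
    exact (hs x hx).symm

lemma isClosed_rightStarStabilizer {R A : Type*} [CommSemiring R] [StarRing R]
    [NonUnitalSemiring A] [StarRing A] [Module R A] [StarModule R A] [SMulCommClass R A A]
    [TopologicalSpace A] [SeparatelyContinuousMul A] [ContinuousStar A] {M : Submodule R A}
    (hM : IsClosed (M : Set A)) : IsClosed (rightStarStabilizer M : Set A) := by
  have h : (rightStarStabilizer M : Set A) =
      ⋂ x ∈ M, (fun s ↦ x * s) ⁻¹' M ∩ (fun s ↦ x * star s) ⁻¹' M := by
    ext s
    simp only [Set.mem_iInter, Set.mem_inter_iff, Set.mem_preimage]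
    exact Iff.rfl
  rw [h]
  exact isClosed_biInter fun x _ ↦
    (hM.preimage (by fun_prop)).inter (hM.preimage (by fun_prop))

variable {A : Type*} [NonUnitalCStarAlgebra A]

lemma mul_cfcₙ_mem {M : Submodule ℝ A} (hM : IsClosed (M : Set A)) {b : A}
    (hb : IsSelfAdjoint b) (h : ∀ x ∈ M, x * b ∈ M) (g : ℝ → ℝ) {x : A} (hx : x ∈ M) :
    x * cfcₙ g b ∈ M := by
  have := isClosed_rightStarStabilizer hM
  have hbM : b ∈ rightStarStabilizer M := fun y hy ↦ ⟨h y hy, by rw [hb.star_eq]; exact h y hy⟩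
  exact (cfcₙ_mem (𝕜' := ℝ) (s := rightStarStabilizer M) g hbM x hx).1

/-- The odd functional calculus `a g(a⋆ a)`. If `a = v |a|` is the polar decomposition, then this
is `v (|a| g(|a|²))`. -/
noncomputable def oddCfc (g : ℝ → ℝ) (a : A) : A :=
  a * cfcₙ g (star a * a)

lemma IsSubtriple.oddCfc_mem {F : Submodule ℝ A} (hF : IsSubtriple F)
    (hFc : IsClosed (F : Set A)) (g : ℝ → ℝ) {a : A} (ha : a ∈ F) : oddCfc g a ∈ F := by
  -- On `M` the two terms of `{a, a, x}` agree, so right multiplication by `a⋆ a` preserves `M`.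
  let M : Submodule ℝ A := F ⊓
    LinearMap.eqLocus (LinearMap.mulRight ℝ (star a * a)) (LinearMap.mulLeft ℝ (a * star a))
  have mem_M {x : A} : x ∈ M ↔ x ∈ F ∧ x * (star a * a) = a * star a * x := Iff.rfl
  have hM : IsClosed (M : Set A) := by
    change IsClosed ((F : Set A) ∩ {x | x * (star a * a) = a * star a * x})
    exact hFc.inter (isClosed_eq (by fun_prop) (by fun_prop))
  have hMb (x : A) (hx : x ∈ M) : x * (star a * a) ∈ M := by
    obtain ⟨hxF, hxa⟩ := mem_M.mp hx
    refine mem_M.mpr ⟨?_, by rw [← mul_assoc (a * star a), ← hxa]⟩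
    have h := hF x hxF a ha a ha
    rw [← hxa, mul_assoc, ← two_smul ℝ] at h
    exact (F.smul_mem_iff two_ne_zero).mp h
  have haM : a ∈ M := mem_M.mpr ⟨ha, (mul_assoc a (star a) a).symm⟩
  exact (mem_M.mp (mul_cfcₙ_mem hM (.star_mul_self a) hMb g haM)).1

variable {a : A} {g h : ℝ → ℝ}

lemma star_oddCfc_mul_oddCfc (hg : ContinuousOn g (quasispectrum ℝ (star a * a))) (hg₀ : g 0 = 0)
    (hh : ContinuousOn h (quasispectrum ℝ (star a * a))) (hh₀ : h 0 = 0) :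
    star (oddCfc g a) * oddCfc h a = cfcₙ (fun t ↦ g t * (t * h t)) (star a * a) := by
  rw [cfcₙ_mul g _ _, cfcₙ_mul (fun t ↦ t) h _, cfcₙ_id' ℝ _, oddCfc, star_mul,
    (IsSelfAdjoint.cfcₙ : IsSelfAdjoint (cfcₙ g (star a * a))).star_eq, oddCfc]
  simp only [mul_assoc]

lemma oddCfc_mul_cfcₙ (hg : ContinuousOn g (quasispectrum ℝ (star a * a))) (hg₀ : g 0 = 0)
    (hh : ContinuousOn h (quasispectrum ℝ (star a * a))) (hh₀ : h 0 = 0) :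
    oddCfc g a * cfcₙ h (star a * a) = oddCfc (fun t ↦ g t * h t) a := by
  rw [oddCfc, mul_assoc, ← cfcₙ_mul g h _, oddCfc]

lemma isLocalUnit_oddCfc (hg : ContinuousOn g (quasispectrum ℝ (star a * a))) (hg₀ : g 0 = 0)
    (hh : ContinuousOn h (quasispectrum ℝ (star a * a))) (hh₀ : h 0 = 0)
    (hgh : ∀ t ∈ quasispectrum ℝ (star a * a), t * g t ^ 2 * h t = h t) :
    IsLocalUnit (oddCfc g a) (oddCfc h a) := by
  constructor
  · rw [mul_assoc, star_oddCfc_mul_oddCfc hg hg₀ hh hh₀,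
      oddCfc_mul_cfcₙ hg hg₀ (by fun_prop) (by simp [hg₀]), oddCfc, oddCfc]
    congr 1
    refine cfcₙ_congr fun t ht ↦ ?_
    linear_combination hgh t ht
  · rw [mul_assoc, star_oddCfc_mul_oddCfc hg hg₀ hg hg₀,
      oddCfc_mul_cfcₙ hh hh₀ (by fun_prop) (by simp [hg₀]), oddCfc, oddCfc]
    congr 1
    refine cfcₙ_congr fun t ht ↦ ?_
    linear_combination hgh t ht

lemma nonneg_of_mem_quasispectrum_star_mul_self {t : ℝ}
    (ht : t ∈ quasispectrum ℝ (star a * a)) : 0 ≤ t := by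
  let := CStarAlgebra.spectralOrder A
  have := CStarAlgebra.spectralOrderedRing A
  exact quasispectrum_nonneg_of_nonneg _ (star_mul_self_nonneg a) t ht

lemma norm_oddCfc_le (hg : ContinuousOn g (quasispectrum ℝ (star a * a))) (hg₀ : g 0 = 0)
    {C : ℝ} (hC : 0 ≤ C) (h : ∀ t ∈ quasispectrum ℝ (star a * a), t * g t ^ 2 ≤ C ^ 2) :
    ‖oddCfc g a‖ ≤ C := by
  refine (sq_le_sq₀ (norm_nonneg _) hC).mp ?_
  rw [sq, ← CStarRing.norm_star_mul_self, star_oddCfc_mul_oddCfc hg hg₀ hg hg₀]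
  refine norm_cfcₙ_le fun t ht ↦ ?_
  have ht₀ := nonneg_of_mem_quasispectrum_star_mul_self ht
  rw [show g t * (t * g t) = t * g t ^ 2 by ring, Real.norm_of_nonneg (by positivity)]
  exact h t ht

lemma star_sub_oddCfc_mul_sub_oddCfc (hg : ContinuousOn g (quasispectrum ℝ (star a * a)))
    (hg₀ : g 0 = 0) :
    star (a - oddCfc g a) * (a - oddCfc g a) =
      cfcₙ (fun t ↦ t * (1 - g t) ^ 2) (star a * a) := by
  have hexpand : (fun t ↦ t * (1 - g t) ^ 2) =
      fun t ↦ (t - t * g t) - (g t * t - g t * (t * g t)) := by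
    funext t
    ring
  rw [hexpand, cfcₙ_sub (fun t ↦ t - t * g t) (fun t ↦ g t * t - g t * (t * g t)) _,
    cfcₙ_sub (fun t ↦ t) (fun t ↦ t * g t) _,
    cfcₙ_sub (fun t ↦ g t * t) (fun t ↦ g t * (t * g t)) _,
    ← star_oddCfc_mul_oddCfc hg hg₀ hg hg₀, cfcₙ_mul (fun t ↦ t) g _,
    cfcₙ_mul g (fun t ↦ t) _, cfcₙ_id' ℝ _, star_sub, sub_mul, mul_sub, mul_sub]
  simp only [oddCfc, star_mul,
    (IsSelfAdjoint.cfcₙ : IsSelfAdjoint (cfcₙ g (star a * a))).star_eq, mul_assoc]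

lemma norm_sub_oddCfc_le (hg : ContinuousOn g (quasispectrum ℝ (star a * a))) (hg₀ : g 0 = 0)
    {C : ℝ} (hC : 0 ≤ C) (h : ∀ t ∈ quasispectrum ℝ (star a * a), t * (1 - g t) ^ 2 ≤ C ^ 2) :
    ‖a - oddCfc g a‖ ≤ C := by
  refine (sq_le_sq₀ (norm_nonneg _) hC).mp ?_
  rw [sq, ← CStarRing.norm_star_mul_self, star_sub_oddCfc_mul_sub_oddCfc hg hg₀]
  refine norm_cfcₙ_le fun t ht ↦ ?_
  have ht₀ := nonneg_of_mem_quasispectrum_star_mul_self ht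
  rw [Real.norm_of_nonneg (by positivity)]
  exact h t ht

end OddFunctionalCalculus

section Cutoffs

/-- The continuous cutoff which vanishes on `(-∞, k]`, is `1` on `[k + 1, ∞)` and is affine in
between. -/
noncomputable def ramp (k t : ℝ) : ℝ := max 0 (min 1 (t - k))

lemma continuous_ramp (k : ℝ) : Continuous (ramp k) := by
  unfold ramp
  fun_prop

lemma ramp_nonneg (k t : ℝ) : 0 ≤ ramp k t := le_max_left _ _

lemma ramp_le_one (k t : ℝ) : ramp k t ≤ 1 := max_le zero_le_one (min_le_left _ _)

lemma ramp_eq_zero {k t : ℝ} (h : t ≤ k) : ramp k t = 0 :=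
  max_eq_left ((min_le_right _ _).trans (sub_nonpos.mpr h))

lemma ramp_eq_one {k t : ℝ} (h : k + 1 ≤ t) : ramp k t = 1 := by
  rw [ramp, min_eq_left (le_sub_iff_add_le'.mpr h), max_eq_right zero_le_one]

/-- For `1 ≤ k`, a continuous version of `ramp k t / √t`, whose odd functional calculus is
`v * ramp k (|a|²)` for the polar decomposition `a = v |a|`. -/
noncomputable def sqrtRamp (k t : ℝ) : ℝ := ramp k t / √(max t 1)

lemma continuous_sqrtRamp (k : ℝ) : Continuous (sqrtRamp k) := by
  refine (continuous_ramp k).div (by fun_prop) fun t ↦ ?_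
  exact (Real.sqrt_pos.mpr (zero_lt_one.trans_le (le_max_right t 1))).ne'

lemma sqrtRamp_eq_zero {k t : ℝ} (h : t ≤ k) : sqrtRamp k t = 0 := by
  rw [sqrtRamp, ramp_eq_zero h, zero_div]

lemma mul_sqrtRamp_sq {k : ℝ} (hk : 1 ≤ k) (t : ℝ) : t * sqrtRamp k t ^ 2 = ramp k t ^ 2 := by
  rcases le_total t k with h | h
  · simp [sqrtRamp_eq_zero h, ramp_eq_zero h]
  · have ht : 0 < t := zero_lt_one.trans_le (hk.trans h)
    rw [sqrtRamp, max_eq_left (hk.trans h), div_pow, Real.sq_sqrt ht.le, mul_div_cancel₀ _ ht.ne']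

lemma mul_sqrtRamp_sq_mul {k : ℝ} (hk : 1 ≤ k) {h : ℝ → ℝ} (hh : ∀ t ≤ k + 1, h t = 0) (t : ℝ) :
    t * sqrtRamp k t ^ 2 * h t = h t := by
  rw [mul_sqrtRamp_sq hk]
  rcases le_total t (k + 1) with ht | ht
  · rw [hh t ht, mul_zero]
  · rw [ramp_eq_one ht, one_pow, one_mul]

lemma mul_one_sub_ramp_sq_le {k t : ℝ} (ht : 0 ≤ t) (hk : 0 ≤ k + 1) :
    t * (1 - ramp k t) ^ 2 ≤ k + 1 := by
  rcases le_total t (k + 1) with h | h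
  · have hsq : (1 - ramp k t) ^ 2 ≤ 1 :=
      pow_le_one₀ (sub_nonneg.mpr (ramp_le_one k t)) (sub_le_self 1 (ramp_nonneg k t))
    exact (mul_le_of_le_one_right ht hsq).trans h
  · rw [ramp_eq_one h, sub_self, zero_pow two_ne_zero, mul_zero]
    exact hk

end Cutoffs

section InnerIdeals

variable {A : Type*} [NonUnitalCStarAlgebra A] {F : Submodule ℝ A}

lemma isLocalUnit_oddCfc_sqrtRamp (a : A) {k : ℝ} (hk : 1 ≤ k) {h : ℝ → ℝ} (hhc : Continuous h)
    (hh : ∀ t ≤ k + 1, h t = 0) : IsLocalUnit (oddCfc (sqrtRamp k) a) (oddCfc h a) :=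
  isLocalUnit_oddCfc (continuous_sqrtRamp k).continuousOn (sqrtRamp_eq_zero (by linarith))
    hhc.continuousOn (hh 0 (by linarith)) fun t _ ↦ mul_sqrtRamp_sq_mul hk hh t

lemma norm_oddCfc_sqrtRamp_le_one (a : A) {k : ℝ} (hk : 1 ≤ k) :
    ‖oddCfc (sqrtRamp k) a‖ ≤ 1 := by
  refine norm_oddCfc_le (continuous_sqrtRamp k).continuousOn (sqrtRamp_eq_zero (by linarith))
    zero_le_one fun t _ ↦ ?_
  rw [mul_sqrtRamp_sq hk]
  exact pow_le_pow_left₀ (ramp_nonneg k t) (ramp_le_one k t) 2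

lemma norm_sub_oddCfc_ramp_le (a : A) {k : ℝ} (hk : 0 ≤ k) :
    ‖a - oddCfc (ramp k) a‖ ≤ √(k + 1) := by
  refine norm_sub_oddCfc_le (continuous_ramp k).continuousOn (ramp_eq_zero hk)
    (Real.sqrt_nonneg _) fun t ht ↦ ?_
  rw [Real.sq_sqrt (by positivity)]
  exact mul_one_sub_ramp_sq_le (nonneg_of_mem_quasispectrum_star_mul_self ht) (by positivity)

lemma IsSubtriple.oddCfc_ramp_mul_mul_mem (hF : IsSubtriple F)
    (hC : IsChebyshev (F : Set A)) (hB : ∀ e ∈ F, ∃ z ∈ F, bergmann e e z ≠ 0) {a : A}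
    (ha : a ∈ F) {k : ℝ} (hk : 3 ≤ k) (x : A) :
    oddCfc (ramp k) a * x * oddCfc (ramp k) a ∈ F := by
  have mem (g : ℝ → ℝ) : oddCfc g a ∈ F := hF.oddCfc_mem hC.isClosed g ha
  have hef : IsLocalUnit (oddCfc (sqrtRamp 1) a) (oddCfc (sqrtRamp 2) a) :=
    isLocalUnit_oddCfc_sqrtRamp a le_rfl (continuous_sqrtRamp 2)
      fun t ht ↦ sqrtRamp_eq_zero (by linarith)
  have hfp : IsLocalUnit (oddCfc (sqrtRamp 2) a) (oddCfc (ramp k) a) :=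
    isLocalUnit_oddCfc_sqrtRamp a one_le_two (continuous_ramp k)
      fun t ht ↦ ramp_eq_zero (by linarith)
  exact hF.mem_of_isLocalUnit hC (mem _) (mem _) (norm_oddCfc_sqrtRamp_le_one a one_le_two) hef
    (hfp.mul_mul x) (hB _ (mem _))

lemma IsSubtriple.mul_mul_mem (hF : IsSubtriple F) (hC : IsChebyshev (F : Set A))
    (hB : ∀ e ∈ F, ∃ z ∈ F, bergmann e e z ≠ 0) {a : A} (ha : a ∈ F) (x : A) :
    a * x * a ∈ F := by
  let s : Set A := {p | p * x * p ∈ F}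
  have hs : IsClosed s := hC.isClosed.preimage (f := fun p ↦ p * x * p) (by fun_prop)
  have hsmul (r : ℝ) (p : A) (hp : p ∈ s) : r • p ∈ s := by
    have h : r • p * x * r • p = r • r • (p * x * p) := by
      simp only [smul_mul_assoc, mul_smul_comm]
    change r • p * x * r • p ∈ F
    rw [h]
    exact F.smul_mem r (F.smul_mem r hp)
  exact mem_of_forall_exists_norm_smul_sub_le hs hsmul fun r ↦ ⟨oddCfc (ramp 3) (r • a),
    hF.oddCfc_ramp_mul_mul_mem hC hB (F.smul_mem r ha) le_rfl x,
    norm_sub_oddCfc_ramp_le (r • a) zero_le_three⟩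

theorem cebysev_subtriple_without_BP_is_inner_ideal_general (hF : IsSubtriple F)
    (hC : IsChebyshev (F : Set A)) (hB : ∀ e ∈ F, ∃ z ∈ F, bergmann e e z ≠ 0) :
    ∀ a ∈ F, ∀ b ∈ F, ∀ x : A, a * star x * b + b * star x * a ∈ F := by
  intro a ha b hb x
  have key {c : A} (hc : c ∈ F) : c * star x * c ∈ F := hF.mul_mul_mem hC hB hc (star x)
  have polarization : a * star x * b + b * star x * a =
      (a + b) * star x * (a + b) - a * star x * a - b * star x * b := by
    simp only [add_mul, mul_add]
    abel
  rw [polarization]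
  exact F.sub_mem (F.sub_mem (key (F.add_mem ha hb)) (key ha)) (key hb)

end InnerIdeals

/-- Let `A` be a C*-algebra and `F` a JB*-subtriple of `A` which is a
Chebyshev subspace of `A`. If no element of `F` is Brown–Pedersen quasi-invertible
in `F`, then `F` is an inner ideal of `A`:
`a x* b + b x* a ∈ F` for all `a, b ∈ F` and all `x ∈ A`. -/
theorem cebysev_subtriple_without_BP_is_inner_ideal
    {A : Type*} [NonUnitalNormedRing A] [StarRing A] [CStarRing A]
    [NormedSpace ℂ A] [IsScalarTower ℂ A A] [SMulCommClass ℂ A A]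
    [StarModule ℂ A] [CompleteSpace A]
    (F : Submodule ℂ A) (hFclosed : IsClosed (F : Set A))
    (hFtriple : ∀ x ∈ F, ∀ y ∈ F, ∀ z ∈ F,
      (2 : ℂ)⁻¹ • (x * star y * z + z * star y * x) ∈ F)
    (hCheb : ∀ x : A, ∃! v : A, v ∈ F ∧ ‖x - v‖ = Metric.infDist x (F : Set A))
    (hBP : ∀ u ∈ F, ¬ ∃ y ∈ F, ∀ z ∈ F,
      z - u * star y * z - z * star y * u + u * star y * z * star y * u = 0) :
    ∀ a ∈ F, ∀ b ∈ F, ∀ x : A, a * star x * b + b * star x * a ∈ F := by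
  let : NonUnitalCStarAlgebra A := {}
  exact cebysev_subtriple_without_BP_is_inner_ideal_general (F := F.restrictScalars ℝ)
    (fun x hx y hy z hz ↦ (F.smul_mem_iff (by norm_num)).mp (hFtriple x hx y hy z hz))
    (fun x ↦ by simpa [IsNearestPoint, dist_eq_norm] using hCheb x)
    (fun e he ↦ by simpa [bergmann] using fun h ↦ hBP e he ⟨e, he, h⟩)
end

section
/- Let A be a C*-algebra, let F be a JB*-subtriple of A which is a Chebyshev subspace of A, and let a be a nonzero element of F. Then every x ∈ A orthogonal to a belongs to F; that is, {x ∈ A : a x* = 0 and x* a = 0} ⊆ F. -/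
/-!
Let `b` be the best approximation in `F` of an element `x` orthogonal to `a`. For a small multiple
`c` of `a`, the Bergman operator `z ↦ (1 - cc*) z (1 - c*c)` is contractive, maps `F` into itself
and fixes `x`, so it sends `b` to a best approximation of `x`, which is `b` again. Comparing the
quadratic and quartic terms in `c` for two different scales gives `a ⊥ b`, hence `a ⊥ x - b`. Norms
of orthogonal elements combine by maximum, so `b` can be moved by a multiple of `a` of norm
`‖x - b‖` without increasing its distance to `x`. By uniqueness that multiple is zero, i.e. `x = b`.
-/

section BestApproximation

variable {E : Type*} [SeminormedAddCommGroup E]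

/-- `b` is the unique nearest point to `x` in `s`, expressed by comparing norms of differences
instead of through the distance to `s`. -/
structure IsUniqueBestApprox (s : Set E) (x b : E) : Prop where
  mem : b ∈ s
  eq_of_norm_sub_le : ∀ v ∈ s, ‖x - v‖ ≤ ‖x - b‖ → v = b

theorem exists_isUniqueBestApprox_of_existsUnique_infDist {s : Set E} {x : E}
    (h : ∃! v, v ∈ s ∧ ‖x - v‖ = Metric.infDist x s) : ∃ b, IsUniqueBestApprox s x b := by
  obtain ⟨b, ⟨hbs, hb⟩, huniq⟩ := h
  refine ⟨b, hbs, fun v hv hle ↦ huniq v ⟨hv, (hle.trans hb.le).antisymm ?_⟩⟩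
  simpa only [dist_eq_norm] using Metric.infDist_le_dist_of_mem hv

end BestApproximation

/-- Orthogonality `a ⊥ b` in the sense of JB*-triples: `a b* = 0` and `b* a = 0`. -/
def TripleOrthogonal {A : Type*} [Mul A] [Zero A] [Star A] (a b : A) : Prop :=
  a * star b = 0 ∧ star b * a = 0

namespace TripleOrthogonal

variable {A : Type*} [NonUnitalRing A] [StarRing A] {a b c : A}

theorem symm (h : TripleOrthogonal a b) : TripleOrthogonal b a :=
  ⟨by simpa using congrArg star h.1, by simpa using congrArg star h.2⟩

theorem sub_right (hb : TripleOrthogonal a b) (hc : TripleOrthogonal a c) :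
    TripleOrthogonal a (b - c) :=
  ⟨by rw [star_sub, mul_sub, hb.1, hc.1, sub_zero], by rw [star_sub, sub_mul, hb.2, hc.2, sub_zero]⟩

theorem smul_left {R : Type*} [SMulZeroClass R A] [IsScalarTower R A A] [SMulCommClass R A A]
    (r : R) (h : TripleOrthogonal a b) : TripleOrthogonal (r • a) b :=
  ⟨by rw [smul_mul_assoc, h.1, smul_zero], by rw [mul_smul_comm, h.2, smul_zero]⟩

end TripleOrthogonal

section TripleProduct

variable {A : Type*} [NonUnitalRing A] [StarRing A] [Module ℂ A]

/-- The JB*-triple product `{a, b, c} = (a b* c + c b* a) / 2` of a C*-algebra. -/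
noncomputable def tripleProduct (a b c : A) : A :=
  (2 : ℂ)⁻¹ • (a * star b * c + c * star b * a)

/-- Stability of a set under the triple product. A JB*-subtriple is a closed complex subspace with
this property; a real one is a closed real subspace with it. -/
def IsTripleClosed (s : Set A) : Prop :=
  ∀ a ∈ s, ∀ b ∈ s, ∀ c ∈ s, tripleProduct a b c ∈ s

/-- The diagonal Bergman operator `B(c, c) z = z - 2 {c, c, z} + {c, {c, z, c}, c}`. -/
noncomputable def bergman (c z : A) : A :=
  z - 2 • tripleProduct c c z + tripleProduct c (tripleProduct c z c) c

theorem bergman_mem {F : AddSubgroup A} (hF : IsTripleClosed (F : Set A)) {c z : A}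
    (hc : c ∈ F) (hz : z ∈ F) : bergman c z ∈ F :=
  F.add_mem (F.sub_mem hz (F.nsmul_mem (hF c hc c hc z hz) 2))
    (hF c hc _ (hF c hc z hz c hc) c hc)

theorem tripleProduct_self_outer (c z : A) : tripleProduct c z c = c * star z * c := by
  rw [tripleProduct, ← two_smul ℂ, inv_smul_smul₀ two_ne_zero]

theorem bergman_eq (c z : A) :
    bergman c z =
      z - (c * star c * z + z * (star c * c)) + c * star c * z * (star c * c) := by
  have two_nsmul_tripleProduct :
      2 • tripleProduct c c z = c * star c * z + z * (star c * c) := by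
    rw [tripleProduct, ← Nat.cast_smul_eq_nsmul ℂ, Nat.cast_ofNat, smul_inv_smul₀ two_ne_zero,
      mul_assoc z]
  rw [bergman, two_nsmul_tripleProduct, tripleProduct_self_outer, tripleProduct_self_outer]
  simp only [star_mul, star_star, mul_assoc]

theorem bergman_sub (c z w : A) : bergman c (z - w) = bergman c z - bergman c w := by
  simp only [bergman_eq, mul_sub, sub_mul]
  abel

theorem bergman_smul [IsScalarTower ℂ A A] [SMulCommClass ℂ A A] [StarModule ℂ A]
    (t : ℝ) (c z : A) :
    bergman (t • c) z =
      z - t ^ 2 • (c * star c * z + z * (star c * c)) +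
        t ^ 4 • (c * star c * z * (star c * c)) := by
  simp only [bergman_eq, star_smul, star_trivial, smul_mul_assoc, mul_smul_comm, smul_smul,
    smul_add]
  ring_nf

theorem inr_bergman [IsScalarTower ℂ A A] [SMulCommClass ℂ A A] (c z : A) :
    ((bergman c z : A) : Unitization ℂ A) =
      (1 - (c : Unitization ℂ A) * star (c : Unitization ℂ A)) * z *
        (1 - star (c : Unitization ℂ A) * c) := by
  rw [bergman_eq]
  simp only [Unitization.inr_add, Unitization.inr_sub, Unitization.inr_mul, Unitization.inr_star]
  noncomm_ring

theorem TripleOrthogonal.bergman_eq_self {c z : A} (h : TripleOrthogonal c z) :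
    bergman c z = z := by
  rw [bergman_eq, mul_assoc c, h.symm.2, ← mul_assoc z, h.symm.1]
  simp only [mul_zero, zero_mul, add_zero, sub_zero]

end TripleProduct

section CStarRing

variable {A : Type*} [NonUnitalNormedRing A] [StarRing A] [CStarRing A]

theorem mul_star_self_mul_eq_zero_iff (c z : A) : c * star c * z = 0 ↔ star c * z = 0 := by
  refine ⟨fun h ↦ ?_, fun h ↦ by rw [mul_assoc, h, mul_zero]⟩
  rw [← CStarRing.star_mul_self_eq_zero_iff, star_mul, star_star, mul_assoc, ← mul_assoc c, h,
    mul_zero]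

theorem mul_star_mul_self_eq_zero_iff (c z : A) : z * (star c * c) = 0 ↔ z * star c = 0 := by
  rw [← star_eq_zero, ← star_eq_zero (x := z * star c)]
  simpa only [star_mul, star_star, mul_assoc] using mul_star_self_mul_eq_zero_iff (star c) (star z)

theorem tripleOrthogonal_of_add_eq_zero {c z : A}
    (hadd : c * star c * z + z * (star c * c) = 0)
    (hmul : c * star c * z * (star c * c) = 0) : TripleOrthogonal c z := by
  have hleft_sq : c * star c * (c * star c * z) = 0 := by
    rw [eq_neg_of_add_eq_zero_left hadd, mul_neg, ← mul_assoc, hmul, neg_zero]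
  have hleft : c * star c * z = 0 := by
    have hcancel : star c * star (star c) * (star c * z) = 0 := by
      simpa only [star_star, mul_assoc] using (mul_star_self_mul_eq_zero_iff c _).mp hleft_sq
    simpa only [star_star, mul_assoc] using (mul_star_self_mul_eq_zero_iff (star c) _).mp hcancel
  have hright : z * (star c * c) = 0 := by rwa [hleft, zero_add] at hadd
  rw [mul_star_self_mul_eq_zero_iff] at hleft
  rw [mul_star_mul_self_eq_zero_iff] at hright
  exact TripleOrthogonal.symm ⟨hright, hleft⟩

theorem tripleOrthogonal_of_bergman_smul_eq_self [Module ℂ A] [IsScalarTower ℂ A A]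
    [SMulCommClass ℂ A A] [StarModule ℂ A] {c z : A} {s t : ℝ} (hs : s ≠ 0) (ht : t ≠ 0)
    (hst : s ^ 2 ≠ t ^ 2) (hsz : bergman (s • c) z = z) (htz : bergman (t • c) z = z) :
    TripleOrthogonal c z := by
  have add_eq_smul_mul {r : ℝ} (hr : r ≠ 0) (h : bergman (r • c) z = z) :
      c * star c * z + z * (star c * c) = r ^ 2 • (c * star c * z * (star c * c)) := by
    rw [bergman_smul, sub_add, sub_eq_self, sub_eq_zero, show r ^ 4 = r ^ 2 * r ^ 2 by ring,
      mul_smul] at h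
    exact smul_right_injective A (pow_ne_zero 2 hr) h
  have hmul : c * star c * z * (star c * c) = 0 := by
    by_contra hne
    exact hst (smul_left_injective ℝ hne
      ((add_eq_smul_mul hs hsz).symm.trans (add_eq_smul_mul ht htz)))
  refine tripleOrthogonal_of_add_eq_zero ?_ hmul
  rw [add_eq_smul_mul hs hsz, hmul, smul_zero]

end CStarRing

section CStarAlgebra

theorem norm_one_sub_mul_star_self_le_one {B : Type*} [CStarAlgebra B] {c : B} (hc : ‖c‖ ≤ 1) :
    ‖1 - c * star c‖ ≤ 1 := by
  let _ : PartialOrder B := CStarAlgebra.spectralOrder B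
  let _ : StarOrderedRing B := CStarAlgebra.spectralOrderedRing B
  have hnonneg : 0 ≤ c * star c := mul_star_self_nonneg c
  have hnorm : ‖c * star c‖ ≤ 1 := by
    rw [CStarRing.norm_self_mul_star]
    exact mul_le_one₀ hc (norm_nonneg c) hc
  have hle : c * star c ≤ 1 := (CStarAlgebra.norm_le_one_iff_of_nonneg _ hnonneg).mp hnorm
  rw [CStarAlgebra.norm_le_one_iff_of_nonneg _ (sub_nonneg.mpr hle)]
  exact sub_le_self 1 hnonneg

variable {A : Type*} [NonUnitalCStarAlgebra A]

theorem norm_bergman_le {c : A} (hc : ‖c‖ ≤ 1) (z : A) : ‖bergman c z‖ ≤ ‖z‖ := by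
  have hc' : ‖(c : Unitization ℂ A)‖ ≤ 1 := by rwa [Unitization.norm_inr]
  have hleft := norm_one_sub_mul_star_self_le_one hc'
  have hright := norm_one_sub_mul_star_self_le_one ((norm_star (c : Unitization ℂ A)).trans_le hc')
  rw [star_star] at hright
  rw [← Unitization.norm_inr (𝕜 := ℂ), inr_bergman, ← Unitization.norm_inr (𝕜 := ℂ) (a := z)]
  calc
    _ ≤ ‖1 - (c : Unitization ℂ A) * star (c : Unitization ℂ A)‖ * ‖(z : Unitization ℂ A)‖ *
        ‖1 - star (c : Unitization ℂ A) * c‖ := norm_mul₃_le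
    _ ≤ 1 * ‖(z : Unitization ℂ A)‖ * 1 := by gcongr
    _ = ‖(z : Unitization ℂ A)‖ := by rw [one_mul, mul_one]

theorem TripleOrthogonal.norm_add {a b : A} (h : TripleOrthogonal a b) :
    ‖a + b‖ = max ‖a‖ ‖b‖ := by
  have hprod : star a * a * (star b * b) = 0 := by
    rw [mul_assoc, ← mul_assoc a, h.1, zero_mul, mul_zero]
  have hexpand : star (a + b) * (a + b) = star a * a + star b * b := by
    rw [star_add, add_mul, mul_add, mul_add, h.2, h.symm.2, add_zero, zero_add]
  rw [← sq_eq_sq₀ (norm_nonneg _) (le_max_of_le_left (norm_nonneg a)),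
    (pow_left_monotoneOn (n := 2)).map_max (norm_nonneg a) (norm_nonneg b)]
  simp only [sq, ← CStarRing.norm_star_mul_self]
  rw [hexpand, (IsSelfAdjoint.star_mul_self a).norm_add_eq_max (.star_mul_self b) hprod]

namespace IsUniqueBestApprox

variable {a b c x : A}

theorem bergman_eq_self {F : AddSubgroup A} (hb : IsUniqueBestApprox (F : Set A) x b)
    (hF : IsTripleClosed (F : Set A)) (hcF : c ∈ F) (hc : ‖c‖ ≤ 1) (hcx : TripleOrthogonal c x) :
    bergman c b = b := by
  refine hb.eq_of_norm_sub_le _ (bergman_mem hF hcF hb.mem) ?_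
  calc
    ‖x - bergman c b‖ = ‖bergman c (x - b)‖ := by rw [bergman_sub, hcx.bergman_eq_self]
    _ ≤ ‖x - b‖ := norm_bergman_le hc _

theorem tripleOrthogonal {F : Submodule ℝ A} (hb : IsUniqueBestApprox (F : Set A) x b)
    (hF : IsTripleClosed (F : Set A)) (ha : a ∈ F) (hax : TripleOrthogonal a x) :
    TripleOrthogonal a b := by
  have bergman_smul_eq_self {t : ℝ} (ht : ‖t • a‖ ≤ 1) : bergman (t • a) b = b :=
    hb.bergman_eq_self (F := F.toAddSubgroup) hF (F.smul_mem t ha) ht (hax.smul_left t)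
  obtain ⟨t, ht, hta⟩ : ∃ t : ℝ, 0 < t ∧ ‖t • a‖ ≤ 1 := by
    refine ⟨(1 + ‖a‖)⁻¹, by positivity, ?_⟩
    rw [norm_smul, norm_inv, Real.norm_of_nonneg (by positivity)]
    exact inv_mul_le_one_of_le₀ (by linarith) (by positivity)
  refine tripleOrthogonal_of_bergman_smul_eq_self ht.ne' (half_pos ht).ne' ?_
    (bergman_smul_eq_self hta) (bergman_smul_eq_self ?_)
  · exact (pow_lt_pow_left₀ (half_lt_self ht) (half_pos ht).le two_ne_zero).ne'
  · rw [div_eq_inv_mul, mul_smul, norm_smul]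
    exact mul_le_one₀ (by norm_num) (norm_nonneg _) hta

theorem eq_of_tripleOrthogonal {F : Submodule ℝ A} (hb : IsUniqueBestApprox (F : Set A) x b)
    (ha : a ∈ F) (ha0 : a ≠ 0) (hax : TripleOrthogonal a x) (hab : TripleOrthogonal a b) :
    x = b := by
  set c : A := (‖x - b‖ / ‖a‖) • a
  have hc : ‖c‖ = ‖x - b‖ := by
    rw [norm_smul, norm_div, norm_norm, norm_norm, div_mul_cancel₀ _ (norm_ne_zero_iff.mpr ha0)]
  have hdist : ‖x - (b - c)‖ = ‖x - b‖ := by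
    have horth : TripleOrthogonal c (x - b) := (hax.sub_right hab).smul_left _
    rw [← sub_add, add_comm, horth.norm_add, hc, max_self]
  have hc0 : c = 0 :=
    sub_eq_self.mp (hb.eq_of_norm_sub_le _ (F.sub_mem hb.mem (F.smul_mem _ ha)) hdist.le)
  rwa [hc0, norm_zero, eq_comm, norm_sub_eq_zero_iff] at hc

end IsUniqueBestApprox

theorem orthogonal_complement_subset_cebysev_subtriple_general (F : Submodule ℝ A)
    (hF : IsTripleClosed (F : Set A)) {a x : A} (ha : a ∈ F) (ha0 : a ≠ 0)
    (hax : TripleOrthogonal a x)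
    (hx : ∃! v, v ∈ F ∧ ‖x - v‖ = Metric.infDist x (F : Set A)) : x ∈ F := by
  obtain ⟨b, hb⟩ := exists_isUniqueBestApprox_of_existsUnique_infDist hx
  have hab : TripleOrthogonal a b := hb.tripleOrthogonal hF ha hax
  rw [hb.eq_of_tripleOrthogonal ha ha0 hax hab]
  exact hb.mem

end CStarAlgebra

/-- Let `A` be a C*-algebra, `F` a JB*-subtriple of `A` which is a
Chebyshev subspace of `A`, and `a` a nonzero element of `F`. Then every `x ∈ A`
orthogonal to `a` belongs to `F`: `{x ∈ A : a x* = 0 ∧ x* a = 0} ⊆ F`. -/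
theorem orthogonal_complement_subset_cebysev_subtriple
    {A : Type*} [NonUnitalNormedRing A] [StarRing A] [CStarRing A]
    [NormedSpace ℂ A] [IsScalarTower ℂ A A] [SMulCommClass ℂ A A]
    [StarModule ℂ A] [CompleteSpace A]
    (F : Submodule ℂ A) (hFclosed : IsClosed (F : Set A))
    (hFtriple : ∀ x ∈ F, ∀ y ∈ F, ∀ z ∈ F,
      (2 : ℂ)⁻¹ • (x * star y * z + z * star y * x) ∈ F)
    (hCheb : ∀ x : A, ∃! v : A, v ∈ F ∧ ‖x - v‖ = Metric.infDist x (F : Set A))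
    (a : A) (ha : a ∈ F) (ha0 : a ≠ 0) :
    {x : A | a * star x = 0 ∧ star x * a = 0} ⊆ (F : Set A) := by
  let _ : NonUnitalCStarAlgebra A := {}
  exact fun x hx ↦ orthogonal_complement_subset_cebysev_subtriple_general
    (F.restrictScalars ℝ) hFtriple ha ha0 hx (hCheb x)
end
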